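/- For every fixed pair of reals 0 ≤ u < v ≤ 1, setting k := ⌊1/(v−u)⌋, the limit lim_{x→∞} H(x, x^u, x^v)/x exists and equals 1 − Σ_ℰ ∫_{P_{u,v}(ℰ)} ρ((1 − Σ_{i=1}^k t_i)/t_k) · dt₁⋯dt_k/(t₁⋯t_k), where the sum runs over all families ℰ of subsets of {1,…,k} and each integral is the Lebesgue integral over the polytope P_{u,v}(ℰ) ⊆ ℝ^k. -/

import Mathlib

open Filter MeasureTheory

/-- `Hcnt x y z` is the number of integers `n` with `1 ≤ n ≤ x` having a divisor `d`
with `y < d < z`. -/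
noncomputable def Hcnt (x y z : ℝ) : ℕ :=
  {n : ℕ | 1 ≤ n ∧ (n : ℝ) ≤ x ∧ ∃ d : ℕ, d ∣ n ∧ y < (d : ℝ) ∧ (d : ℝ) < z}.ncard

/-- The simplex `Δᵏ` of nonincreasing nonnegative vectors with coordinate sum at most `1`. -/
def simplexSet (k : ℕ) : Set (Fin k → ℝ) :=
  {x | (∀ i j : Fin k, i ≤ j → x j ≤ x i) ∧ (∀ i, 0 ≤ x i) ∧ ∑ i, x i ≤ 1}

/-- The polytope `P_{u,v}(ℰ)`. -/
def Puv (u v : ℝ) {k : ℕ} (ℰ : Finset (Finset (Fin k))) : Set (Fin k → ℝ) :=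
  {x | x ∈ simplexSet k ∧ ∀ E : Finset (Fin k),
    (E ∈ ℰ → v ≤ ∑ i ∈ E, x i) ∧ (E ∉ ℰ → 1 - u ≤ ∑ i ∈ Eᶜ, x i)}

/-- primes up to `x` -/
noncomputable def PX (x : ℝ) : Finset ℕ := (Finset.Ioc 0 ⌊x⌋₊).filter Nat.Prime

lemma mem_PX {x : ℝ} (hx : 0 ≤ x) {p : ℕ} : p ∈ PX x ↔ p.Prime ∧ (p : ℝ) ≤ x := by
  unfold PX
  rw [Finset.mem_filter, Finset.mem_Ioc, Nat.le_floor_iff hx]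
  constructor
  · rintro ⟨⟨_, h⟩, hp⟩; exact ⟨hp, h⟩
  · rintro ⟨hp, h⟩; exact ⟨⟨hp.pos, h⟩, hp⟩

lemma sum_vM_floor (N : ℕ) :
    ∑ n ∈ Finset.Ioc 0 N, ArithmeticFunction.vonMangoldt n * ((N / n : ℕ) : ℝ)
      = Real.log (N.factorial) := by
  have h := ArithmeticFunction.sum_Ioc_mul_zeta_eq_sum (R := ℝ) ArithmeticFunction.vonMangoldt N
  rw [← h, ArithmeticFunction.vonMangoldt_mul_zeta]
  induction N with
  | zero => simp
  | succ n ih =>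
    rw [Finset.sum_Ioc_succ_top (by omega), ih, Nat.factorial_succ, Nat.cast_mul,
      Real.log_mul (by positivity) (by positivity)]
    · simp [ArithmeticFunction.log_apply]; ring
    · exact ArithmeticFunction.sum_Ioc_mul_zeta_eq_sum (R := ℝ) ArithmeticFunction.vonMangoldt n

lemma log_fact_lower (N : ℕ) (hN : 1 ≤ N) : N * Real.log N - N ≤ Real.log (N.factorial) := by
  have h := Real.pow_div_factorial_le_exp (x := (N : ℝ)) (by positivity) N
  have h2 : Real.log ((N : ℝ) ^ N / N.factorial) ≤ N := by
    rw [Real.log_le_iff_le_exp (by positivity)]; exact h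
  rw [Real.log_div (by positivity) (by positivity), Real.log_pow] at h2
  linarith

lemma log_fact_upper (N : ℕ) : Real.log (N.factorial) ≤ N * Real.log N := by
  rw [← Real.log_pow]
  apply Real.log_le_log (by positivity)
  exact_mod_cast Nat.factorial_le_pow N

lemma mertens_vM : ∃ C : ℝ, ∀ N : ℕ, 1 ≤ N →
    |∑ n ∈ Finset.Ioc 0 N, ArithmeticFunction.vonMangoldt n / n - Real.log N| ≤ C := by
  refine ⟨Real.log 4 + 5, fun N hN => ?_⟩
  have hN' : (0 : ℝ) < N := by exact_mod_cast hN
  have h1 := sum_vM_floor N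
  have h2 := log_fact_lower N hN
  have h3 := log_fact_upper N
  have hpsi := Chebyshev.psi_le_const_mul_self (x := (N : ℝ)) (by positivity)
  have hpsi' : Chebyshev.psi N = ∑ n ∈ Finset.Ioc 0 N, ArithmeticFunction.vonMangoldt n := by
    simp [Chebyshev.psi]
  set S := ∑ n ∈ Finset.Ioc 0 N, ArithmeticFunction.vonMangoldt n / n with hS
  have hlog4 : 0 ≤ Real.log 4 := Real.log_nonneg (by norm_num)
  have hup : Real.log (N.factorial) ≤ N * S := by
    rw [← h1, hS, Finset.mul_sum]
    apply Finset.sum_le_sum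
    intro n hn
    have := Nat.cast_div_le (α := ℝ) (m := N) (n := n)
    have hL : 0 ≤ ArithmeticFunction.vonMangoldt n := ArithmeticFunction.vonMangoldt_nonneg
    calc _ ≤ ArithmeticFunction.vonMangoldt n * ((N : ℝ) / n) := by gcongr
      _ = _ := by ring
  have hlow : N * S - Chebyshev.psi N ≤ Real.log (N.factorial) := by
    rw [← h1, hS, Finset.mul_sum, hpsi', ← Finset.sum_sub_distrib]
    apply Finset.sum_le_sum
    intro n hn
    have hn0 : 0 < n := (Finset.mem_Ioc.mp hn).1
    have hL : 0 ≤ ArithmeticFunction.vonMangoldt n := ArithmeticFunction.vonMangoldt_nonneg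
    have : (N : ℝ) / n - 1 ≤ ((N / n : ℕ) : ℝ) := by
      have := Nat.lt_floor_add_one ((N : ℝ) / n)
      rw [Nat.floor_div_eq_div] at this
      linarith
    calc _ = ArithmeticFunction.vonMangoldt n * ((N : ℝ) / n - 1) := by ring
      _ ≤ _ := by gcongr
  rw [abs_le]
  constructor
  · have : N * (Real.log N - 1) ≤ N * S := by linarith
    have := le_of_mul_le_mul_left this hN'
    linarith
  · have : N * S ≤ N * (Real.log N + (Real.log 4 + 4)) := by linarith
    have := le_of_mul_le_mul_left this hN'
    linarith

lemma mertens_prime : ∃ C : ℝ, ∀ N : ℕ, 1 ≤ N →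
    |∑ p ∈ (Finset.Ioc 0 N).filter Nat.Prime, Real.log p / p - Real.log N| ≤ C := by
  obtain ⟨C, hC⟩ := mertens_vM
  have hs := ArithmeticFunction.vonMangoldt.summable_residueClass_non_primes_div (q := 1) (0 : ZMod 1)
  have hcl : ∀ n, ArithmeticFunction.vonMangoldt.residueClass (0 : ZMod 1) n
      = ArithmeticFunction.vonMangoldt n := by
    intro n
    unfold ArithmeticFunction.vonMangoldt.residueClass
    rw [Set.indicator_of_mem]
    exact Subsingleton.elim _ _
  simp only [hcl] at hs
  refine ⟨C + ∑' n : ℕ, (if n.Prime then 0 else ArithmeticFunction.vonMangoldt n) / (n : ℝ),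
    fun N hN => ?_⟩
  have hnn : ∀ n : ℕ, 0 ≤ (if n.Prime then 0 else ArithmeticFunction.vonMangoldt n) / (n : ℝ) := by
    intro n
    apply div_nonneg _ (by positivity)
    split_ifs
    · exact le_rfl
    · exact ArithmeticFunction.vonMangoldt_nonneg
  have hsum : ∑ n ∈ Finset.Ioc 0 N, ArithmeticFunction.vonMangoldt n / n
      = ∑ p ∈ (Finset.Ioc 0 N).filter Nat.Prime, Real.log p / p
       + ∑ n ∈ Finset.Ioc 0 N, (if n.Prime then 0 else ArithmeticFunction.vonMangoldt n) / (n : ℝ) := by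
    rw [Finset.sum_filter, ← Finset.sum_add_distrib]
    apply Finset.sum_congr rfl
    intro n hn
    split_ifs with h
    · rw [ArithmeticFunction.vonMangoldt_apply_prime h]; simp
    · simp
  have h1 := hC N hN
  have h2 := hs.sum_le_tsum (Finset.Ioc 0 N) (fun n _ => hnn n)
  have h3 := Finset.sum_nonneg (s := Finset.Ioc 0 N) (fun n _ => hnn n)
  rw [hsum] at h1
  rw [abs_le] at h1 ⊢
  constructor <;> linarith

/-- weights -/
noncomputable def wt (x : ℝ) (p : ℕ) : ℝ := Real.log p / (p * Real.log x)
/-- logarithmic size -/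
noncomputable def tau (x : ℝ) (p : ℕ) : ℝ := Real.log p / Real.log x

lemma mertens_tendsto : Tendsto (fun x : ℝ => (∑ p ∈ PX x, Real.log p / p) / Real.log x)
    atTop (nhds 1) := by
  obtain ⟨C, hC⟩ := mertens_prime
  rw [tendsto_iff_norm_sub_tendsto_zero]
  have hlim : Tendsto (fun x : ℝ => (C + Real.log 2) / Real.log x) atTop (nhds 0) :=
    Tendsto.div_atTop tendsto_const_nhds Real.tendsto_log_atTop
  refine squeeze_zero' (Eventually.of_forall fun _ => norm_nonneg _) ?_ hlim
  filter_upwards [eventually_ge_atTop 2] with x hx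
  have hlx : 0 < Real.log x := Real.log_pos (by linarith)
  have hN : 1 ≤ ⌊x⌋₊ := Nat.le_floor (by norm_num; linarith)
  have h1 := hC _ hN
  have hNp : (0 : ℝ) < ⌊x⌋₊ := by exact_mod_cast hN
  have h2 : Real.log ⌊x⌋₊ ≤ Real.log x := Real.log_le_log hNp (Nat.floor_le (by linarith))
  have h3 : Real.log x ≤ Real.log 2 + Real.log ⌊x⌋₊ := by
    rw [← Real.log_mul (by norm_num) hNp.ne']
    apply Real.log_le_log (by linarith)
    have := Nat.lt_floor_add_one x
    have : (1 : ℝ) ≤ ⌊x⌋₊ := by exact_mod_cast hN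
    linarith
  unfold PX
  set S := ∑ p ∈ (Finset.Ioc 0 ⌊x⌋₊).filter Nat.Prime, Real.log p / p
  rw [Real.norm_eq_abs]
  have : S / Real.log x - 1 = (S - Real.log x) / Real.log x := by field_simp
  rw [this, abs_div, abs_of_pos hlx]
  gcongr
  rw [abs_le] at h1 ⊢
  constructor <;> linarith

lemma tau_le_iff {x : ℝ} (hx : 1 < x) {p : ℕ} (hp : 0 < p) (a : ℝ) :
    tau x p ≤ a ↔ (p : ℝ) ≤ x ^ a := by
  unfold tau
  rw [div_le_iff₀ (Real.log_pos hx), ← Real.log_rpow (by linarith),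
    Real.log_le_log_iff (by exact_mod_cast hp) (by positivity)]

lemma le_tau_iff {x : ℝ} (hx : 1 < x) {p : ℕ} (hp : 0 < p) (a : ℝ) :
    a ≤ tau x p ↔ x ^ a ≤ (p : ℝ) := by
  unfold tau
  rw [le_div_iff₀ (Real.log_pos hx), ← Real.log_rpow (by linarith),
    Real.log_le_log_iff (by positivity) (by exact_mod_cast hp)]

lemma wt_cdf (a : ℝ) (ha : 0 ≤ a) (ha1 : a ≤ 1) :
    Tendsto (fun x : ℝ => ∑ p ∈ (PX x).filter (fun p => tau x p ≤ a), wt x p) atTop (nhds a) := by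
  have key : ∀ x : ℝ, 1 < x → (PX x).filter (fun p => tau x p ≤ a) = PX (x ^ a) := by
    intro x hx
    ext p
    rw [Finset.mem_filter, mem_PX (by linarith), mem_PX (by positivity)]
    constructor
    · rintro ⟨⟨hp, _⟩, h⟩
      exact ⟨hp, (tau_le_iff hx hp.pos a).1 h⟩
    · rintro ⟨hp, h⟩
      refine ⟨⟨hp, h.trans ?_⟩, (tau_le_iff hx hp.pos a).2 h⟩
      calc x ^ a ≤ x ^ (1 : ℝ) := Real.rpow_le_rpow_of_exponent_le hx.le ha1
        _ = x := Real.rpow_one x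
  rcases ha.eq_or_lt with rfl | ha
  · apply tendsto_const_nhds.congr'
    filter_upwards [eventually_gt_atTop 1] with x hx
    rw [key x hx, Real.rpow_zero]
    simp [PX, Finset.filter_singleton, Nat.not_prime_one]
  · have h := (mertens_tendsto.comp (tendsto_rpow_atTop ha)).const_mul a
    rw [mul_one] at h
    refine h.congr' ?_
    filter_upwards [eventually_gt_atTop 1] with x hx
    rw [key x hx]
    have hlx : 0 < Real.log x := Real.log_pos hx
    simp only [Function.comp]
    rw [Real.log_rpow (by linarith), Finset.sum_div, Finset.mul_sum]
    apply Finset.sum_congr rfl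
    intro p _
    unfold wt
    field_simp

section RI
variable {k : ℕ}

/-- unit cube -/
def cube (k : ℕ) : Set (Fin k → ℝ) := Set.pi Set.univ (fun _ => Set.Ioc (0 : ℝ) 1)

/-- weighted prime sum -/
noncomputable def SX (x : ℝ) (F : (Fin k → ℝ) → ℝ) : ℝ :=
  ∑ p ∈ Fintype.piFinset (fun _ : Fin k => PX x), (∏ i, wt x (p i)) * F (fun i => tau x (p i))

lemma wt_cell (M j : ℕ) (hj : j + 1 ≤ M) :
    Tendsto (fun x : ℝ => ∑ p ∈ (PX x).filter (fun p => ⌈(M : ℝ) * tau x p⌉₊ = j + 1), wt x p)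
      atTop (nhds (1 / M)) := by
  have hM : (0 : ℝ) < M := by exact_mod_cast (by omega : 0 < M)
  have hj' : (j : ℝ) + 1 ≤ M := by exact_mod_cast hj
  have h1 := wt_cdf (((j + 1 : ℕ) : ℝ) / M) (by positivity)
    (by rw [div_le_one hM]; push_cast; exact hj')
  have h2 := wt_cdf ((j : ℝ) / M) (by positivity) (by rw [div_le_one hM]; linarith)
  have h3 := h1.sub h2
  have e : ((j + 1 : ℕ) : ℝ) / M - (j : ℝ) / M = 1 / M := by push_cast; ring
  rw [e] at h3
  refine h3.congr fun x => ?_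
  rw [sub_eq_iff_eq_add, ← Finset.sum_union]
  · apply Finset.sum_congr _ (fun _ _ => rfl)
    ext p
    simp only [Finset.mem_union, Finset.mem_filter]
    rw [le_div_iff₀' hM, le_div_iff₀' hM, ← Nat.ceil_le, ← Nat.ceil_le]
    constructor
    · rintro ⟨hp, h⟩
      by_cases h' : ⌈(M : ℝ) * tau x p⌉₊ ≤ j
      · exact Or.inr ⟨hp, h'⟩
      · exact Or.inl ⟨hp, by omega⟩
    · rintro (⟨hp, h⟩ | ⟨hp, h⟩)
      · exact ⟨hp, by omega⟩
      · exact ⟨hp, by omega⟩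
  · rw [Finset.disjoint_left]
    intro p hp hp2
    simp only [Finset.mem_filter] at hp hp2
    rw [le_div_iff₀' hM, ← Nat.ceil_le] at hp2
    omega

/-- lower cell value -/
noncomputable def Hlow (F : (Fin k → ℝ) → ℝ) (M : ℕ) (c : Fin k → ℕ) : ℝ :=
  sInf (F '' {s | ∀ i, ⌈(M : ℝ) * s i⌉₊ = c i})

lemma Hlow_le {F : (Fin k → ℝ) → ℝ} {B : ℝ} (hB : ∀ t, |F t| ≤ B) (M : ℕ) (t : Fin k → ℝ) :
    Hlow F M (fun i => ⌈(M : ℝ) * t i⌉₊) ≤ F t := by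
  apply csInf_le
  · refine ⟨-B, ?_⟩
    rintro _ ⟨s, _, rfl⟩
    exact (abs_le.1 (hB s)).1
  · exact ⟨t, fun i => rfl, rfl⟩

lemma abs_Hlow_le {F : (Fin k → ℝ) → ℝ} {B : ℝ} (hB : ∀ t, |F t| ≤ B) (M : ℕ) (t : Fin k → ℝ) :
    |Hlow F M (fun i => ⌈(M : ℝ) * t i⌉₊)| ≤ B := by
  rw [abs_le]
  constructor
  · apply le_csInf
    · exact ⟨F t, t, fun i => rfl, rfl⟩
    · rintro _ ⟨s, _, rfl⟩
      exact (abs_le.1 (hB s)).1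
  · exact (Hlow_le hB M t).trans (abs_le.1 (hB t)).2

lemma ceil_close {M : ℕ} (hM : 0 < M) {a b : ℝ} (hb : 0 < b)
    (h : ⌈(M : ℝ) * a⌉₊ = ⌈(M : ℝ) * b⌉₊) : |a - b| ≤ 1 / M := by
  have hM' : (0 : ℝ) < M := by exact_mod_cast hM
  have hb1 : 0 < (M : ℝ) * b := by positivity
  have hc : 0 < ⌈(M : ℝ) * b⌉₊ := Nat.ceil_pos.2 hb1
  have ha1 : 0 < (M : ℝ) * a := by rw [← h] at hc; exact Nat.ceil_pos.1 hc
  have h1 := Nat.le_ceil ((M : ℝ) * a)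
  have h2 := Nat.le_ceil ((M : ℝ) * b)
  have h3 := Nat.ceil_lt_add_one ha1.le
  have h4 := Nat.ceil_lt_add_one hb1.le
  rw [h] at h1 h3
  have e : a - b = ((M : ℝ) * a - M * b) / M := by field_simp
  rw [e, abs_div, abs_of_pos hM']
  gcongr
  rw [abs_le]
  constructor <;> linarith

lemma Hlow_tendsto {F : (Fin k → ℝ) → ℝ} {B : ℝ} (hB : ∀ t, |F t| ≤ B) (t : Fin k → ℝ)
    (ht : ∀ i, 0 < t i) (hc : ContinuousAt F t) :
    Tendsto (fun M : ℕ => Hlow F M (fun i => ⌈(M : ℝ) * t i⌉₊)) atTop (nhds (F t)) := by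
  rw [Metric.tendsto_atTop]
  intro δ hδ
  obtain ⟨r, hr, hr2⟩ := Metric.continuousAt_iff.1 hc (δ / 2) (by positivity)
  obtain ⟨M0, hM0⟩ := exists_nat_gt (1 / r)
  refine ⟨M0 + 1, fun M hM => ?_⟩
  have hMp : 0 < M := by omega
  have hM' : (0 : ℝ) < M := by exact_mod_cast hMp
  have hMr : 1 / (M : ℝ) < r := by
    rw [div_lt_comm₀ hM' hr]
    have : (M0 : ℝ) ≤ M := by exact_mod_cast (by omega : M0 ≤ M)
    linarith
  have h1 := Hlow_le hB M t
  have h2 : F t - δ / 2 ≤ Hlow F M (fun i => ⌈(M : ℝ) * t i⌉₊) := by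
    apply le_csInf
    · exact ⟨F t, t, fun i => rfl, rfl⟩
    · rintro _ ⟨s, hs, rfl⟩
      have hd : dist s t < r := by
        rw [dist_pi_lt_iff hr]
        intro i
        rw [Real.dist_eq]
        exact (ceil_close hMp (ht i) (hs i)).trans_lt hMr
      have := hr2 hd
      rw [Real.dist_eq, abs_lt] at this
      linarith
  rw [Real.dist_eq, abs_lt]
  constructor <;> linarith

/-- the cell index set -/
def cidx (k M : ℕ) : Finset (Fin k → ℕ) := Fintype.piFinset (fun _ : Fin k => Finset.Icc 1 M)

lemma ceil_mem_cidx {M : ℕ} (hM : 0 < M) {t : Fin k → ℝ} (ht : t ∈ cube k) :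
    (fun i => ⌈(M : ℝ) * t i⌉₊) ∈ cidx k M := by
  have hM' : (0 : ℝ) < M := by exact_mod_cast hM
  unfold cidx
  rw [Fintype.mem_piFinset]
  intro i
  have := ht i (Set.mem_univ i)
  rw [Finset.mem_Icc]
  constructor
  · exact Nat.ceil_pos.2 (mul_pos hM' this.1)
  · rw [Nat.ceil_le]
    nlinarith [this.2]

lemma integral_Hlow (F : (Fin k → ℝ) → ℝ) {M : ℕ} (hM : 0 < M) :
    ∫ t in cube k, Hlow F M (fun i => ⌈(M : ℝ) * t i⌉₊)
      = ∑ c ∈ cidx k M, Hlow F M c * ∏ _i : Fin k, (1 / (M : ℝ)) := by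
  have hM' : (0 : ℝ) < M := by exact_mod_cast hM
  let cell : (Fin k → ℕ) → Set (Fin k → ℝ) := fun c =>
    Set.pi Set.univ (fun i => Set.Ioc (((c i : ℝ) - 1) / M) ((c i : ℝ) / M))
  have hcell : ∀ c ∈ cidx k M, ∀ t ∈ cell c, (fun i => ⌈(M : ℝ) * t i⌉₊) = c := by
    intro c hc t ht
    funext i
    have h1 := ht i (Set.mem_univ i)
    have h2 := Finset.mem_Icc.1 ((Fintype.mem_piFinset.1 hc) i)
    rw [Set.mem_Ioc, div_lt_iff₀' hM', le_div_iff₀' hM'] at h1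
    rw [Nat.ceil_eq_iff (by omega)]
    constructor
    · rw [Nat.cast_sub h2.1]; simpa using h1.1
    · exact h1.2
  have hU : cube k = ⋃ c ∈ cidx k M, cell c := by
    ext t
    simp only [Set.mem_iUnion]
    constructor
    · intro ht
      refine ⟨_, ceil_mem_cidx hM ht, fun i _ => ?_⟩
      have h0 := (ht i (Set.mem_univ i)).1
      have hp : 0 < (M : ℝ) * t i := by positivity
      rw [Set.mem_Ioc, div_lt_iff₀' hM', le_div_iff₀' hM']
      have := Nat.ceil_lt_add_one hp.le
      exact ⟨by linarith, Nat.le_ceil _⟩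
    · rintro ⟨c, hc, ht⟩ i _
      have h1 := ht i (Set.mem_univ i)
      have h2 := Finset.mem_Icc.1 ((Fintype.mem_piFinset.1 hc) i)
      have h3 : (1 : ℝ) ≤ c i := by exact_mod_cast h2.1
      have h4 : (c i : ℝ) ≤ M := by exact_mod_cast h2.2
      constructor
      · refine lt_of_le_of_lt ?_ h1.1
        apply div_nonneg <;> linarith
      · refine h1.2.trans ?_
        rw [div_le_one hM']; exact h4
  have hmeas : ∀ c, MeasurableSet (cell c) := fun c =>
    MeasurableSet.univ_pi (fun i => measurableSet_Ioc)
  have hvol : ∀ c, volume.real (cell c) = ∏ _i : Fin k, (1 / (M : ℝ)) := by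
    intro c
    rw [Measure.real, Real.volume_pi_Ioc_toReal]
    · apply Finset.prod_congr rfl
      intro i _; ring
    · intro i
      simp only
      gcongr; linarith
  have hfin : ∀ c, volume (cell c) ≠ ⊤ := by
    intro c
    simp only [cell]
    rw [Real.volume_pi_Ioc]
    exact ENNReal.prod_ne_top (fun _ _ => ENNReal.ofReal_ne_top)
  have hcongr : ∀ c ∈ cidx k M, Set.EqOn (fun t : Fin k → ℝ => Hlow F M (fun i => ⌈(M : ℝ) * t i⌉₊))
      (fun _ => Hlow F M c) (cell c) := by
    intro c hc t ht
    simp only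
    rw [hcell c hc t ht]
  rw [hU, integral_biUnion_finset]
  · apply Finset.sum_congr rfl
    intro c hc
    rw [setIntegral_congr_fun (hmeas c) (hcongr c hc), setIntegral_const, hvol, smul_eq_mul, mul_comm]
  · intro c _; exact hmeas c
  · intro c hc c' hc' hne
    simp only [Function.onFun]
    rw [Set.disjoint_left]
    intro t ht ht'
    exact hne ((hcell c hc t ht).symm.trans (hcell c' hc' t ht'))
  · intro c hc
    rw [integrableOn_congr_fun (hcongr c hc) (hmeas c)]
    exact integrableOn_const (hfin c)

lemma tau_mem {x : ℝ} (hx : 1 < x) {p : ℕ} (hp : p ∈ PX x) : tau x p ∈ Set.Ioc (0 : ℝ) 1 := by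
  rw [mem_PX (by linarith)] at hp
  have hlx := Real.log_pos hx
  have h1 : 0 < Real.log p := Real.log_pos (by exact_mod_cast hp.1.one_lt)
  refine ⟨div_pos h1 hlx, ?_⟩
  unfold tau
  rw [div_le_one hlx]
  exact Real.log_le_log (by exact_mod_cast hp.1.pos) hp.2

lemma wt_nonneg {x : ℝ} (hx : 1 < x) (p : ℕ) : 0 ≤ wt x p := by
  unfold wt
  have hlx := Real.log_pos hx
  have : 0 ≤ Real.log p := Real.log_natCast_nonneg p
  positivity

lemma SX_step (H : (Fin k → ℕ) → ℝ) {M : ℕ} (hM : 0 < M) :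
    Tendsto (fun x : ℝ => SX x (fun t : Fin k → ℝ => H (fun i => ⌈(M : ℝ) * t i⌉₊))) atTop
      (nhds (∑ c ∈ cidx k M, H c * ∏ _i : Fin k, (1 / (M : ℝ)))) := by
  have h : Tendsto (fun x : ℝ => ∑ c ∈ cidx k M, H c *
      ∏ i : Fin k, ∑ p ∈ (PX x).filter (fun p => ⌈(M : ℝ) * tau x p⌉₊ = c i), wt x p) atTop
      (nhds (∑ c ∈ cidx k M, H c * ∏ _i : Fin k, (1 / (M : ℝ)))) := by
    apply tendsto_finsetSum
    intro c hc
    apply Tendsto.const_mul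
    apply tendsto_finsetProd
    intro i _
    have h2 := Finset.mem_Icc.1 ((Fintype.mem_piFinset.1 hc) i)
    have := wt_cell M (c i - 1) (by omega)
    rwa [Nat.sub_add_cancel h2.1] at this
  refine h.congr' ?_
  filter_upwards [eventually_gt_atTop 1] with x hx
  unfold SX
  rw [← Finset.sum_fiberwise_of_maps_to (s := Fintype.piFinset (fun _ : Fin k => PX x))
    (t := cidx k M) (g := fun p => fun i => ⌈(M : ℝ) * tau x (p i)⌉₊)]
  · apply Finset.sum_congr rfl
    intro c hc
    rw [Finset.prod_univ_sum, Finset.mul_sum]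
    have e : (Fintype.piFinset (fun _ : Fin k => PX x)).filter
        (fun p => (fun i => ⌈(M : ℝ) * tau x (p i)⌉₊) = c)
        = Fintype.piFinset (fun i => (PX x).filter (fun p => ⌈(M : ℝ) * tau x p⌉₊ = c i)) := by
      ext p
      simp only [Finset.mem_filter, Fintype.mem_piFinset, funext_iff]
      exact ⟨fun h i => ⟨h.1 i, h.2 i⟩, fun h => ⟨fun i => (h i).1, fun i => (h i).2⟩⟩
    rw [e]
    apply Finset.sum_congr rfl
    intro p hp
    have : (fun i => ⌈(M : ℝ) * tau x (p i)⌉₊) = c := by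
      funext i
      exact (Finset.mem_filter.1 (Fintype.mem_piFinset.1 hp i)).2
    beta_reduce
    rw [this, mul_comm]
  · intro p hp
    apply ceil_mem_cidx hM (t := fun i => tau x (p i))
    intro i _
    exact tau_mem hx (Fintype.mem_piFinset.1 hp i)

lemma SX_mono {x : ℝ} (hx : 1 < x) {F G : (Fin k → ℝ) → ℝ} (h : ∀ t, F t ≤ G t) :
    SX x F ≤ SX x G := by
  unfold SX
  apply Finset.sum_le_sum
  intro p _
  apply mul_le_mul_of_nonneg_left (h _)
  exact Finset.prod_nonneg (fun i _ => wt_nonneg hx _)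

lemma volume_cube : volume (cube k) ≠ ⊤ := by
  unfold cube
  rw [Real.volume_pi_Ioc]
  exact ENNReal.prod_ne_top (fun _ _ => ENNReal.ofReal_ne_top)

lemma measurableSet_cube : MeasurableSet (cube k) :=
  MeasurableSet.univ_pi (fun i => measurableSet_Ioc)

lemma SX_lower {F : (Fin k → ℝ) → ℝ} {B : ℝ} (hB : ∀ t, |F t| ≤ B)
    (hc : ∀ᵐ t : Fin k → ℝ, ContinuousAt F t) {δ : ℝ} (hδ : 0 < δ) :
    ∀ᶠ x in atTop, (∫ t in cube k, F t) - δ < SX x F := by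
  have hfin : IsFiniteMeasure (volume.restrict (cube k)) :=
    ⟨by rw [Measure.restrict_apply_univ]; exact volume_cube.lt_top⟩
  have hlim : Tendsto (fun M : ℕ => ∫ t in cube k, Hlow F M (fun i => ⌈(M : ℝ) * t i⌉₊)) atTop
      (nhds (∫ t in cube k, F t)) := by
    apply tendsto_integral_of_dominated_convergence (fun _ => B)
    · intro M
      apply Measurable.aestronglyMeasurable
      have : Measurable (fun t : Fin k → ℝ => (fun i => ⌈(M : ℝ) * t i⌉₊)) := by
        apply measurable_pi_lambda
        intro i
        exact Nat.measurable_ceil.comp ((measurable_pi_apply i).const_mul _)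
      exact (Measurable.of_discrete (f := Hlow F M)).comp this
    · exact integrable_const B
    · intro M
      exact Eventually.of_forall (fun t => abs_Hlow_le hB M t)
    · filter_upwards [ae_restrict_mem measurableSet_cube, ae_restrict_of_ae hc] with t ht htc
      exact Hlow_tendsto hB t (fun i => (ht i (Set.mem_univ i)).1) htc
  obtain ⟨M, hM1, hM2⟩ := ((hlim.eventually (lt_mem_nhds
    (show (∫ t in cube k, F t) - δ < ∫ t in cube k, F t by linarith))).and
    (eventually_gt_atTop 0)).exists
  have h2 := SX_step (Hlow F M) hM2
  rw [← integral_Hlow F hM2] at h2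
  filter_upwards [h2.eventually (lt_mem_nhds hM1), eventually_gt_atTop 1] with x hx hx1
  exact hx.trans_le (SX_mono hx1 (fun t => Hlow_le hB M t))

theorem SX_tendsto {F : (Fin k → ℝ) → ℝ} {B : ℝ} (hB : ∀ t, |F t| ≤ B)
    (hc : ∀ᵐ t : Fin k → ℝ, ContinuousAt F t) :
    Tendsto (fun x => SX x F) atTop (nhds (∫ t in cube k, F t)) := by
  rw [Metric.tendsto_nhds]
  intro δ hδ
  have h1 := SX_lower hB hc hδ
  have h2 := SX_lower (F := fun t => - F t) (B := B) (by simpa using hB)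
    (by filter_upwards [hc] with t ht using ht.neg) hδ
  filter_upwards [h1, h2] with x hx1 hx2
  rw [integral_neg] at hx2
  have : SX x (fun t => - F t) = - SX x F := by
    unfold SX
    rw [← Finset.sum_neg_distrib]
    apply Finset.sum_congr rfl
    intro p _; ring
  rw [this] at hx2
  rw [Real.dist_eq, abs_lt]
  constructor <;> linarith

end RI

section comb

open Classical in
/-- smooth numbers up to `X` -/
noncomputable def SM (X z : ℝ) : Finset ℕ :=
  (Finset.Ioc 0 ⌊X⌋₊).filter (fun n => ∀ p : ℕ, p.Prime → p ∣ n → (p : ℝ) ≤ z)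

open Classical in
lemma mem_SM {X z : ℝ} (hX : 0 ≤ X) {n : ℕ} :
    n ∈ SM X z ↔ 0 < n ∧ (n : ℝ) ≤ X ∧ ∀ p : ℕ, p.Prime → p ∣ n → (p : ℝ) ≤ z := by
  unfold SM
  rw [Finset.mem_filter, Finset.mem_Ioc, Nat.le_floor_iff hX, and_assoc]

variable {k : ℕ}

/-- `n` has top primes `p` -/
def TopDec (l : Fin k) (n : ℕ) (p : Fin k → ℕ) (m : ℕ) : Prop :=
  (∀ i, (p i).Prime) ∧ Antitone p ∧ (∀ q : ℕ, q.Prime → q ∣ m → q ≤ p l) ∧ m ≠ 0 ∧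
    n = (∏ i, p i) * m

lemma TopDec.list_eq {l : Fin k} (hl : ∀ i, i ≤ l) {n : ℕ} {p : Fin k → ℕ} {m : ℕ}
    (h : TopDec l n p m) :
    List.ofFn p ++ (Nat.primeFactorsList m).reverse = (Nat.primeFactorsList n).reverse := by
  obtain ⟨hp, ha, hs, hm, hn⟩ := h
  apply List.Perm.eq_of_sortedGE
  · rw [List.sortedGE_iff_pairwise, List.pairwise_append]
    refine ⟨(ha.sortedGE_ofFn).pairwise, ?_, ?_⟩
    · rw [List.pairwise_reverse]
      exact (Nat.primeFactorsList_sorted m).pairwise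
    · intro a haa b hb
      rw [List.mem_reverse, Nat.mem_primeFactorsList hm] at hb
      obtain ⟨i, rfl⟩ := (List.mem_ofFn' p a).1 haa
      exact (hs b hb.1 hb.2).trans (ha (hl i))
  · rw [List.sortedGE_iff_pairwise, List.pairwise_reverse]
    exact (Nat.primeFactorsList_sorted n).pairwise
  · refine List.Perm.trans ?_ (List.reverse_perm _).symm
    apply Nat.primeFactorsList_unique
    · rw [List.prod_append, List.prod_ofFn, List.prod_reverse, Nat.prod_primeFactorsList hm, hn]
    · intro q hq
      rw [List.mem_append, List.mem_reverse] at hq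
      rcases hq with hq | hq
      · obtain ⟨i, rfl⟩ := (List.mem_ofFn' p q).1 hq
        exact hp i
      · exact Nat.prime_of_mem_primeFactorsList hq

lemma TopDec.unique {l : Fin k} (hl : ∀ i, i ≤ l) {n : ℕ} {p p' : Fin k → ℕ} {m m' : ℕ}
    (h : TopDec l n p m) (h' : TopDec l n p' m') : p = p' := by
  have e := (h.list_eq hl).trans (h'.list_eq hl).symm
  have := (List.append_inj e (by simp)).1
  exact List.ofFn_injective this

lemma exists_top {l : Fin k} (hl : ∀ i, i ≤ l) {n : ℕ} (hn : n ≠ 0) (y : ℝ) (Q : Finset ℕ)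
    (hQ : ∀ q ∈ Q, q.Prime ∧ q ∣ n ∧ y < q) (hk : k ≤ Q.card) :
    ∃ p m, TopDec l n p m ∧ ∀ i, y < p i := by
  set L := (Nat.primeFactorsList n).reverse with hL
  have hLs : L.Pairwise (· ≥ ·) := by
    rw [hL, List.pairwise_reverse]
    exact (Nat.primeFactorsList_sorted n).pairwise
  have hLp : ∀ q ∈ L, q.Prime := by
    intro q hq
    rw [hL, List.mem_reverse] at hq
    exact Nat.prime_of_mem_primeFactorsList hq
  have hQL : ∀ q ∈ Q, q ∈ L := by
    intro q hq
    rw [hL, List.mem_reverse, Nat.mem_primeFactorsList hn]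
    exact ⟨(hQ q hq).1, (hQ q hq).2.1⟩
  have hlen : k ≤ L.length := by
    refine hk.trans ?_
    calc Q.card ≤ L.toFinset.card := Finset.card_le_card (fun q hq => List.mem_toFinset.2 (hQL q hq))
      _ ≤ L.length := List.toFinset_card_le L
  have hget : ∀ i j (hi : i < L.length) (hj : j < L.length), i ≤ j → L[j] ≤ L[i] := by
    intro i j hi hj hij
    rcases hij.eq_or_lt with rfl | hlt
    · exact le_rfl
    · exact (List.pairwise_iff_getElem.1 hLs) i j hi hj hlt
  have hlv : (l : ℕ) = k - 1 := by
    have := hl ⟨k - 1, by have := l.2; omega⟩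
    rw [Fin.le_def] at this
    simp at this
    have := l.2
    omega
  have hpprod : ∏ i : Fin k, L[(i : ℕ)]'(by omega) = (L.take k).prod := by
    rw [← List.prod_ofFn]
    congr 1
    apply List.ext_getElem
    · simp [hlen]
    · intro i h1 h2
      simp [List.getElem_take]
  have hanti : Antitone (fun i : Fin k => L[(i : ℕ)]'(by omega)) := fun i j hij =>
    hget _ _ _ _ hij
  refine ⟨fun i => L[(i : ℕ)]'(by omega), (L.drop k).prod, ⟨?_, hanti, ?_, ?_, ?_⟩, ?_⟩
  · intro i
    exact hLp _ (List.getElem_mem _)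
  · intro q hq hd
    have hqm : q ∈ L.drop k := by
      rw [hq.prime.dvd_prod_iff] at hd
      obtain ⟨a, ha, hqa⟩ := hd
      have := (Nat.prime_dvd_prime_iff_eq hq (hLp a (List.mem_of_mem_drop ha))).1 hqa
      rwa [this]
    rw [List.mem_iff_getElem] at hqm
    obtain ⟨j, hj, rfl⟩ := hqm
    rw [List.getElem_drop]
    apply hget
    omega
  · apply List.prod_ne_zero
    intro h0
    exact absurd (hLp 0 (List.mem_of_mem_drop h0)) Nat.not_prime_zero
  · rw [hpprod, List.prod_take_mul_prod_drop, hL, List.prod_reverse, Nat.prod_primeFactorsList hn]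
  · by_contra hcon
    push Not at hcon
    obtain ⟨i, hi⟩ := hcon
    have hsub : Q ⊆ (L.take (k - 1)).toFinset := by
      intro q hq
      obtain ⟨j, hj, hje⟩ := List.mem_iff_getElem.1 (hQL q hq)
      have hyq := (hQ q hq).2.2
      rw [List.mem_toFinset, List.mem_take_iff_getElem]
      refine ⟨j, ?_, hje⟩
      by_contra hjk
      have h1 : k - 1 ≤ j := by omega
      have h2 := hget i j (by omega) hj (by omega)
      rw [hje] at h2
      have : (q : ℝ) ≤ (L[(i : ℕ)]'(by omega) : ℕ) := by exact_mod_cast h2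
      linarith
    have h1 := Finset.card_le_card hsub
    have h2 := List.toFinset_card_le (L.take (k - 1))
    rw [List.length_take] at h2
    have := l.2
    omega

lemma dvd_prod_primes {ι : Type*} [DecidableEq ι] (S : Finset ι) (p : ι → ℕ)
    (hp : ∀ i, (p i).Prime) : ∀ d, d ∣ ∏ i ∈ S, p i → ∃ E ⊆ S, d = ∏ i ∈ E, p i := by
  induction S using Finset.induction_on with
  | empty => intro d hd; exact ⟨∅, le_rfl, by simpa using hd⟩
  | insert a S ha ih =>
    intro d hd
    rw [Finset.prod_insert ha] at hd
    by_cases h : p a ∣ d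
    · obtain ⟨e, rfl⟩ := h
      have := Nat.dvd_of_mul_dvd_mul_left (hp a).pos hd
      obtain ⟨E, hE, rfl⟩ := ih e this
      refine ⟨insert a E, Finset.insert_subset_insert a hE, ?_⟩
      rw [Finset.prod_insert (fun h => ha (hE h))]
    · have hc : Nat.Coprime d (p a) := ((Nat.Prime.coprime_iff_not_dvd (hp a)).2 h).symm
      obtain ⟨E, hE, rfl⟩ := ih d (hc.dvd_of_dvd_mul_left hd)
      exact ⟨E, hE.trans (Finset.subset_insert a S), rfl⟩

lemma rpow_tau {x : ℝ} (hx : 1 < x) {p : ℕ} (hp : 0 < p) : x ^ tau x p = p := by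
  have hlx := Real.log_pos hx
  rw [Real.rpow_def_of_pos (by linarith)]
  unfold tau
  rw [mul_div_cancel₀ _ hlx.ne', Real.exp_log (by exact_mod_cast hp)]

lemma prod_eq_rpow {x : ℝ} (hx : 1 < x) {p : Fin k → ℕ} (hp : ∀ i, (p i).Prime)
    (E : Finset (Fin k)) : ((∏ i ∈ E, p i : ℕ) : ℝ) = x ^ (∑ i ∈ E, tau x (p i)) := by
  rw [Real.rpow_sum_of_pos (by linarith)]
  push_cast
  apply Finset.prod_congr rfl
  intro i _
  rw [rpow_tau hx (hp i).pos]

/-- no-divisor conditions with tolerance -/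
def Nset (u v η : ℝ) (k : ℕ) : Set (Fin k → ℝ) :=
  {t | ∀ E : Finset (Fin k), v ≤ ∑ i ∈ E, t i ∨ 1 - η - u ≤ ∑ i ∈ Eᶜ, t i}

lemma no_div_of_Nset {l : Fin k} {x u v : ℝ} (hx : 1 < x) {n : ℕ} {p : Fin k → ℕ} {m : ℕ}
    (h : TopDec l n p m) (hnx : (n : ℝ) ≤ x) (ht : (fun i => tau x (p i)) ∈ Nset u v 0 k)
    {d : ℕ} (hd : d ∣ n) (h1 : x ^ u < (d : ℝ)) : x ^ v ≤ (d : ℝ) := by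
  obtain ⟨hp, ha, hs, hm, rfl⟩ := h
  obtain ⟨d1, d2, hd1, hd2, rfl⟩ := exists_dvd_and_dvd_of_dvd_mul hd
  obtain ⟨E, -, rfl⟩ := dvd_prod_primes _ p hp d1 hd1
  have hd20 : 0 < d2 := Nat.pos_of_dvd_of_pos hd2 (Nat.pos_of_ne_zero hm)
  rcases ht E with h | h
  · have h2 := prod_eq_rpow hx hp E
    rw [Nat.cast_mul, h2]
    have h3 : x ^ v ≤ x ^ (∑ i ∈ E, tau x (p i)) := Real.rpow_le_rpow_of_exponent_le hx.le h
    have h4 : (1 : ℝ) ≤ d2 := by exact_mod_cast hd20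
    have h5 : 0 < x ^ v := by positivity
    nlinarith
  · exfalso
    have h2 := prod_eq_rpow hx hp Eᶜ
    have h3 : x ^ (1 - u) ≤ x ^ (∑ i ∈ Eᶜ, tau x (p i)) :=
      Real.rpow_le_rpow_of_exponent_le hx.le (by linarith)
    rw [← h2] at h3
    have e : x ^ (1 - u) * x ^ u = x := by
      rw [← Real.rpow_add (by linarith)]; simp
    have hle : ((∏ i ∈ Eᶜ, p i : ℕ) : ℝ) * (((∏ i ∈ E, p i) * d2 : ℕ) : ℝ) ≤ x := by
      refine le_trans ?_ hnx
      rw [← Finset.prod_mul_prod_compl E p]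
      have : d2 ≤ m := Nat.le_of_dvd (Nat.pos_of_ne_zero hm) hd2
      have h7 : (∏ i ∈ Eᶜ, p i) * ((∏ i ∈ E, p i) * d2) ≤ ((∏ i ∈ E, p i) * (∏ i ∈ Eᶜ, p i)) * m := by
        calc _ = ((∏ i ∈ E, p i) * (∏ i ∈ Eᶜ, p i)) * d2 := by ring
          _ ≤ _ := Nat.mul_le_mul_left _ this
      exact_mod_cast h7
    have h6 : 0 < x ^ u := by positivity
    have h7 : 0 < x ^ (1 - u) := by positivity
    nlinarith

lemma Nset_of_no_div {l : Fin k} (hl : ∀ i, i ≤ l) {x u v η : ℝ} (hx : 1 < x) {n : ℕ}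
    {p : Fin k → ℕ} {m : ℕ}
    (h : TopDec l n p m) (hnx : (n : ℝ) ≤ x) (hnη : x ^ (1 - η) ≤ (n : ℝ))
    (hk : 1 < (k + 1) * (v - u))
    (hd : ∀ d : ℕ, d ∣ n → x ^ u < (d : ℝ) → x ^ v ≤ (d : ℝ)) :
    (fun i => tau x (p i)) ∈ Nset u v η k := by
  obtain ⟨hp, ha, hs, hm, hn⟩ := h
  have hnp : 0 < n := by
    rw [hn]
    exact Nat.mul_pos (Finset.prod_pos (fun i _ => (hp i).pos)) (Nat.pos_of_ne_zero hm)
  have hsmall : ∀ q : ℕ, q.Prime → q ∣ m → (q : ℝ) < x ^ (v - u) := by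
    intro q hq hqm
    have h1 : q ^ (k + 1) ≤ n := by
      rw [hn, pow_succ]
      apply Nat.mul_le_mul
      · calc q ^ k = ∏ _i : Fin k, q := by simp
          _ ≤ _ := Finset.prod_le_prod' (fun i _ => (hs q hq hqm).trans (ha (hl i)))
      · exact Nat.le_of_dvd (Nat.pos_of_ne_zero hm) hqm
    have h2 : (q : ℝ) ^ (k + 1) ≤ x := le_trans (by exact_mod_cast h1) hnx
    by_contra hcon
    push Not at hcon
    have h3 : (x ^ (v - u)) ^ (k + 1) ≤ (q : ℝ) ^ (k + 1) := by gcongr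
    rw [← Real.rpow_natCast, ← Real.rpow_mul (by linarith)] at h3
    have h4 : x ^ (1 : ℝ) < x ^ ((v - u) * ((k + 1 : ℕ) : ℝ)) := by
      apply Real.rpow_lt_rpow_of_exponent_lt hx
      push_cast; linarith
    rw [Real.rpow_one] at h4
    linarith
  intro E
  by_cases hE : x ^ u < ((∏ i ∈ E, p i : ℕ) : ℝ)
  · left
    have h1 := hd (∏ i ∈ E, p i) (by
      rw [hn]
      exact dvd_mul_of_dvd_left (Finset.prod_dvd_prod_of_subset _ _ _ (Finset.subset_univ E)) _) hE
    rw [prod_eq_rpow hx hp] at h1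
    exact (Real.rpow_le_rpow_left_iff hx).1 h1
  · right
    push Not at hE
    have hall : ∀ e : ℕ, e ∣ m → (((∏ i ∈ E, p i) * e : ℕ) : ℝ) ≤ x ^ u := by
      intro e
      induction e using induction_on_primes with
      | zero => intro h0; exact absurd (zero_dvd_iff.1 h0) hm
      | one => intro _; simpa using hE
      | prime_mul q a hq iha =>
        intro hqm
        have hqm' : q ∣ m := (dvd_mul_right q a).trans hqm
        have ha' : a ∣ m := (dvd_mul_left a q).trans hqm
        have iha := iha ha'
        by_contra hcon
        push Not at hcon
        have h1 := hd ((∏ i ∈ E, p i) * (q * a)) (by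
          rw [hn]
          exact mul_dvd_mul (Finset.prod_dvd_prod_of_subset _ _ _ (Finset.subset_univ E)) hqm) hcon
        have h2 := hsmall q hq hqm'
        have h3 : (((∏ i ∈ E, p i) * (q * a) : ℕ) : ℝ) < x ^ u * x ^ (v - u) := by
          have e : (((∏ i ∈ E, p i) * (q * a) : ℕ) : ℝ)
            = (((∏ i ∈ E, p i) * a : ℕ) : ℝ) * q := by push_cast; ring
          rw [e]
          have : (0 : ℝ) < q := by exact_mod_cast hq.pos
          have : 0 < x ^ u := by positivity
          nlinarith
        rw [← Real.rpow_add (by linarith), add_sub_cancel] at h3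
        linarith
    have h1 := hall m dvd_rfl
    have h2 : (n : ℝ) = ((∏ i ∈ Eᶜ, p i : ℕ) : ℝ) * (((∏ i ∈ E, p i) * m : ℕ) : ℝ) := by
      rw [hn, ← Finset.prod_mul_prod_compl E p]
      push_cast; ring
    have h3 := prod_eq_rpow hx hp Eᶜ
    rw [h3] at h2
    have h4 : x ^ (1 - η) ≤ x ^ (∑ i ∈ Eᶜ, tau x (p i)) * x ^ u := by
      rw [h2] at hnη
      refine hnη.trans ?_
      gcongr
    rw [← Real.rpow_add (by linarith)] at h4
    have := (Real.rpow_le_rpow_left_iff hx).1 h4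
    linarith

/-- Integers up to `x` with top primes in a region -/
def TopSet (l : Fin k) (x : ℝ) (R : Set (Fin k → ℝ)) : Set ℕ :=
  {n | 0 < n ∧ (n : ℝ) ≤ x ∧ ∃ p m, TopDec l n p m ∧ (fun i => tau x (p i)) ∈ R}

lemma tau_antitone {x : ℝ} (hx : 1 < x) {p : Fin k → ℕ} (hp : ∀ i, (p i).Prime)
    (h : Antitone (fun i => tau x (p i))) : Antitone p := by
  intro i j hij
  have h1 : tau x (p j) ≤ tau x (p i) := h hij
  have h2 := (tau_le_iff hx (hp j).pos _).1 h1
  rw [rpow_tau hx (hp i).pos] at h2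
  exact_mod_cast h2

open Classical in
lemma ncard_TopSet {l : Fin k} (hl : ∀ i, i ≤ l) {x : ℝ} (hx : 1 < x) {R : Set (Fin k → ℝ)}
    (hR : ∀ t ∈ R, Antitone t) :
    (TopSet l x R).ncard = ∑ p ∈ Fintype.piFinset (fun _ : Fin k => PX x),
      if (fun i => tau x (p i)) ∈ R then
        (SM (x / ∏ i, (p i : ℝ)) (p l)).card else 0 := by
  rw [← Finset.sum_filter]
  have hpr : ∀ p ∈ (Fintype.piFinset (fun _ : Fin k => PX x)).filter
      (fun p => (fun i => tau x (p i)) ∈ R), (∀ i, (p i).Prime) := by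
    intro p hp i
    have := Fintype.mem_piFinset.1 (Finset.mem_filter.1 hp).1 i
    exact ((mem_PX (by linarith)).1 this).1
  have htop : ∀ p ∈ (Fintype.piFinset (fun _ : Fin k => PX x)).filter
      (fun p => (fun i => tau x (p i)) ∈ R), ∀ m ∈ SM (x / ∏ i, (p i : ℝ)) (p l),
      TopDec l ((∏ i, p i) * m) p m ∧ 0 < (∏ i, p i) * m ∧ (((∏ i, p i) * m : ℕ) : ℝ) ≤ x := by
    intro p hp m hm
    have hpp := hpr p hp
    have hprod : (0 : ℝ) < ∏ i, (p i : ℝ) := Finset.prod_pos (fun i _ => by exact_mod_cast (hpp i).pos)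
    rw [mem_SM (by positivity)] at hm
    refine ⟨⟨hpp, tau_antitone hx hpp (hR _ (Finset.mem_filter.1 hp).2), ?_, by omega, rfl⟩, ?_, ?_⟩
    · intro q hq hqm; exact_mod_cast hm.2.2 q hq hqm
    · exact Nat.mul_pos (Finset.prod_pos (fun i _ => (hpp i).pos)) hm.1
    · have := hm.2.1
      rw [le_div_iff₀ hprod] at this
      push_cast; linarith
  have hset : TopSet l x R = (((Fintype.piFinset (fun _ : Fin k => PX x)).filter
      (fun p => (fun i => tau x (p i)) ∈ R)).biUnion
      (fun p => (SM (x / ∏ i, (p i : ℝ)) (p l)).image (fun m => (∏ i, p i) * m)) : Finset ℕ) := by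
    ext n
    simp only [Finset.coe_biUnion, Set.mem_iUnion, Finset.coe_image, Set.mem_image, Finset.mem_coe]
    constructor
    · rintro ⟨hn0, hnx, p, m, hT, htR⟩
      obtain ⟨hp, ha, hs, hm, rfl⟩ := hT
      have hprod : (0 : ℝ) < ∏ i, (p i : ℝ) := Finset.prod_pos (fun i _ => by exact_mod_cast (hp i).pos)
      refine ⟨p, ?_, m, ?_, rfl⟩
      · rw [Finset.mem_filter]
        refine ⟨?_, htR⟩
        rw [Fintype.mem_piFinset]
        intro i
        rw [mem_PX (by linarith)]
        refine ⟨hp i, le_trans ?_ hnx⟩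
        have h1 : p i ∣ (∏ i, p i) * m :=
          dvd_mul_of_dvd_left (Finset.dvd_prod_of_mem p (Finset.mem_univ i)) m
        exact_mod_cast Nat.le_of_dvd hn0 h1
      · rw [mem_SM (by positivity)]
        refine ⟨Nat.pos_of_ne_zero hm, ?_, ?_⟩
        · rw [le_div_iff₀ hprod]
          push_cast at hnx
          linarith
        · intro q hq hqm; exact_mod_cast hs q hq hqm
    · rintro ⟨p, hp, m, hm, rfl⟩
      obtain ⟨h1, h2, h3⟩ := htop p hp m hm
      exact ⟨h2, h3, p, m, h1, (Finset.mem_filter.1 hp).2⟩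
  rw [hset, Set.ncard_coe_finset, Finset.card_biUnion]
  · apply Finset.sum_congr rfl
    intro p hp
    apply Finset.card_image_of_injective
    intro a b hab
    exact Nat.eq_of_mul_eq_mul_left (Finset.prod_pos (fun i _ => (hpr p hp i).pos)) hab
  · intro p hp p' hp' hne
    simp only [Function.onFun]
    rw [Finset.disjoint_left]
    intro n hn hn'
    rw [Finset.mem_image] at hn hn'
    obtain ⟨m, hm, rfl⟩ := hn
    obtain ⟨m', hm', he⟩ := hn'
    have h1 := (htop p hp m hm).1
    have h2 := (htop p' hp' m' hm').1
    rw [he] at h2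
    exact hne (h1.unique hl h2)

end comb

section regions
variable {k : ℕ}

/-- measurable with null frontier -/
def NF (R : Set (Fin k → ℝ)) : Prop := MeasurableSet R ∧ volume (frontier R) = 0

lemma NF.inter {R S : Set (Fin k → ℝ)} (hR : NF R) (hS : NF S) : NF (R ∩ S) :=
  ⟨hR.1.inter hS.1, null_frontier_inter hR.2 hS.2⟩

lemma NF.compl {R : Set (Fin k → ℝ)} (hR : NF R) : NF Rᶜ :=
  ⟨hR.1.compl, by rw [frontier_compl]; exact hR.2⟩

lemma NF.union {R S : Set (Fin k → ℝ)} (hR : NF R) (hS : NF S) : NF (R ∪ S) := by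
  have := (hR.compl.inter hS.compl).compl
  rwa [Set.compl_inter, compl_compl, compl_compl] at this

lemma NF.univ : NF (Set.univ : Set (Fin k → ℝ)) := ⟨MeasurableSet.univ, by simp⟩

lemma NF.biInter {ι : Type*} (s : Finset ι) (R : ι → Set (Fin k → ℝ)) (h : ∀ i, NF (R i)) :
    NF (⋂ i ∈ s, R i) := by
  classical
  induction s using Finset.induction_on with
  | empty => simpa using NF.univ
  | insert a s ha ih =>
    rw [Finset.set_biInter_insert]
    exact (h a).inter ih

lemma NF.of_closed_convex {R : Set (Fin k → ℝ)} (h : IsClosed R) (h2 : Convex ℝ R) : NF R :=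
  ⟨h.measurableSet, h2.addHaar_frontier volume⟩

lemma NF_ge (a : ℝ) (E : Finset (Fin k)) : NF {t : Fin k → ℝ | a ≤ ∑ i ∈ E, t i} := by
  apply NF.of_closed_convex
  · exact isClosed_le continuous_const (by fun_prop)
  · intro t ht s hs b c hb hc hbc
    simp only [Set.mem_setOf_eq, Pi.add_apply, Pi.smul_apply, smul_eq_mul] at *
    rw [Finset.sum_add_distrib, ← Finset.mul_sum, ← Finset.mul_sum]
    calc a = b * a + c * a := by rw [← add_mul, hbc, one_mul]
      _ ≤ _ := by gcongr

lemma NF_Nset (u v η : ℝ) : NF (Nset u v η k) := by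
  have : Nset u v η k = ⋂ E ∈ (Finset.univ : Finset (Finset (Fin k))),
      ({t : Fin k → ℝ | v ≤ ∑ i ∈ E, t i} ∪ {t | 1 - η - u ≤ ∑ i ∈ Eᶜ, t i}) := by
    ext t
    simp [Nset]
  rw [this]
  exact NF.biInter _ _ (fun E => (NF_ge _ _).union (NF_ge _ _))

/-- truncated simplex -/
def Deps (l : Fin k) (ε : ℝ) : Set (Fin k → ℝ) :=
  {t | Antitone t ∧ ε ≤ t l ∧ ∑ i, t i ≤ 1}

lemma isClosed_Deps (l : Fin k) (ε : ℝ) : IsClosed (Deps l ε) := by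
  have : Deps l ε = (⋂ i : Fin k, ⋂ j : Fin k, ⋂ _ : i ≤ j, {t : Fin k → ℝ | t j ≤ t i}) ∩
      ({t | ε ≤ t l} ∩ {t | ∑ i, t i ≤ 1}) := by
    ext t
    simp [Deps, Antitone]
  rw [this]
  refine IsClosed.inter (isClosed_iInter fun i => isClosed_iInter fun j => isClosed_iInter fun _ => ?_)
    (IsClosed.inter ?_ ?_)
  · exact isClosed_le (by fun_prop) (by fun_prop)
  · exact isClosed_le (by fun_prop) (by fun_prop)
  · exact isClosed_le (by fun_prop) (by fun_prop)

lemma NF_Deps (l : Fin k) (ε : ℝ) : NF (Deps l ε) := by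
  apply NF.of_closed_convex (isClosed_Deps l ε)
  rintro t ⟨ht1, ht2, ht3⟩ s ⟨hs1, hs2, hs3⟩ b c hb hc hbc
  refine ⟨?_, ?_, ?_⟩
  · intro i j hij
    simp only [Pi.add_apply, Pi.smul_apply, smul_eq_mul]
    have := ht1 hij
    have := hs1 hij
    gcongr
  · simp only [Pi.add_apply, Pi.smul_apply, smul_eq_mul]
    calc ε = b * ε + c * ε := by rw [← add_mul, hbc, one_mul]
      _ ≤ _ := by gcongr
  · simp only [Pi.add_apply, Pi.smul_apply, smul_eq_mul]
    rw [Finset.sum_add_distrib, ← Finset.mul_sum, ← Finset.mul_sum]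
    calc _ ≤ b * 1 + c * 1 := by gcongr
      _ = 1 := by linarith

lemma Deps_pos {l : Fin k} (hl : ∀ i, i ≤ l) {ε : ℝ} {t : Fin k → ℝ} (ht : t ∈ Deps l ε)
    (i : Fin k) : ε ≤ t i := ht.2.1.trans (ht.1 (hl i))

lemma Deps_sub_cube {l : Fin k} (hl : ∀ i, i ≤ l) {ε : ℝ} (hε : 0 < ε) : Deps l ε ⊆ cube k := by
  intro t ht i _
  have h := Deps_pos hl ht
  refine ⟨hε.trans_le (h i), le_trans ?_ ht.2.2⟩
  exact Finset.single_le_sum (f := t) (fun j _ => hε.le.trans (h j)) (Finset.mem_univ i)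

lemma ae_cont_indicator {R : Set (Fin k → ℝ)} (hR : NF R) {G : (Fin k → ℝ) → ℝ}
    (hG : ContinuousOn G R) : ∀ᵐ t : Fin k → ℝ, ContinuousAt (R.indicator G) t := by
  have h : ∀ᵐ t : Fin k → ℝ, t ∉ frontier R := measure_eq_zero_iff_ae_notMem.1 hR.2
  filter_upwards [h] with t ht
  by_cases h1 : t ∈ interior R
  · have h2 : R ∈ nhds t := mem_interior_iff_mem_nhds.1 h1
    refine (hG.continuousAt h2).congr ?_
    filter_upwards [h2] with s hs
    rw [Set.indicator_of_mem hs]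
  · have h2 : t ∉ closure R := fun h3 => ht ⟨h3, h1⟩
    have h3 : (closure R)ᶜ ∈ nhds t := isClosed_closure.isOpen_compl.mem_nhds h2
    refine (continuousAt_const (y := (0 : ℝ))).congr ?_
    filter_upwards [h3] with s hs
    rw [Set.indicator_of_notMem (fun h => hs (subset_closure h))]

/-- strip -/
def strip (k : ℕ) (δ : ℝ) : Set (Fin k → ℝ) := {t | 1 - δ < ∑ i, t i ∧ ∑ i, t i ≤ 1}

lemma NF_le : NF {t : Fin k → ℝ | ∑ i, t i ≤ 1} := by
  apply NF.of_closed_convex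
  · exact isClosed_le (by fun_prop) continuous_const
  · intro t ht s hs b c hb hc hbc
    simp only [Set.mem_setOf_eq, Pi.add_apply, Pi.smul_apply, smul_eq_mul] at *
    rw [Finset.sum_add_distrib, ← Finset.mul_sum, ← Finset.mul_sum]
    calc _ ≤ b * 1 + c * 1 := by gcongr
      _ = 1 := by linarith

lemma NF_gt (a : ℝ) : NF {t : Fin k → ℝ | a < ∑ i, t i} := by
  have h : NF {t : Fin k → ℝ | ∑ i, t i ≤ a} := by
    apply NF.of_closed_convex
    · exact isClosed_le (by fun_prop) continuous_const
    · intro t ht s hs b c hb hc hbc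
      simp only [Set.mem_setOf_eq, Pi.add_apply, Pi.smul_apply, smul_eq_mul] at *
      rw [Finset.sum_add_distrib, ← Finset.mul_sum, ← Finset.mul_sum]
      calc _ ≤ b * a + c * a := by gcongr
        _ = a := by rw [← add_mul, hbc, one_mul]
  have h2 := h.compl
  convert h2 using 1
  ext t; simp

lemma NF_strip (δ : ℝ) : NF (strip k δ) := (NF_gt (1 - δ)).inter NF_le

lemma null_sum_eq_one (l : Fin k) : volume {t : Fin k → ℝ | ∑ i, t i = 1} = 0 := by
  refine measure_mono_null ?_ (NF_le (k := k)).2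
  intro t ht
  refine ⟨subset_closure (le_of_eq ht), fun hinr => ?_⟩
  rw [mem_interior_iff_mem_nhds] at hinr
  have hc : ContinuousAt (fun s : ℝ => (fun i => t i + s : Fin k → ℝ)) 0 := by fun_prop
  have h2 : {t : Fin k → ℝ | ∑ i, t i ≤ 1} ∈ nhds ((fun s : ℝ => (fun i => t i + s : Fin k → ℝ)) 0) := by
    simpa using hinr
  have h3 := hc.preimage_mem_nhds h2
  obtain ⟨r, hr, hr2⟩ := Metric.mem_nhds_iff.1 h3
  have h4 : r / 2 ∈ Metric.ball (0 : ℝ) r := by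
    rw [Metric.mem_ball, Real.dist_eq, sub_zero, abs_of_pos (by positivity)]; linarith
  have h5 := hr2 h4
  simp only [Set.mem_preimage, Set.mem_setOf_eq] at h5 ht
  rw [Finset.sum_add_distrib, ht] at h5
  simp at h5
  have : (0 : ℝ) < k := by have := l.2; exact_mod_cast (by omega : 0 < k)
  nlinarith

lemma strip_small (l : Fin k) {κ : ℝ} (hκ : 0 < κ) :
    ∃ δ, 0 < δ ∧ volume.real (cube k ∩ strip k δ) < κ := by
  have h : Tendsto (fun n : ℕ => volume (cube k ∩ strip k (1 / ((n : ℝ) + 1)))) atTop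
      (nhds (volume (⋂ n : ℕ, cube k ∩ strip k (1 / ((n : ℝ) + 1))))) := by
    apply tendsto_measure_iInter_atTop
    · intro n
      exact (measurableSet_cube.inter (NF_strip _).1).nullMeasurableSet
    · intro a b hab t ht
      refine ⟨ht.1, lt_of_le_of_lt ?_ ht.2.1, ht.2.2⟩
      have : 1 / ((b : ℝ) + 1) ≤ 1 / ((a : ℝ) + 1) := by
        apply one_div_le_one_div_of_le (by positivity)
        have : (a : ℝ) ≤ b := by exact_mod_cast hab
        linarith
      linarith
    · exact ⟨0, measure_ne_top_of_subset Set.inter_subset_left volume_cube⟩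
  have h0 : volume (⋂ n : ℕ, cube k ∩ strip k (1 / ((n : ℝ) + 1))) = 0 := by
    refine measure_mono_null ?_ (null_sum_eq_one l)
    intro t ht
    rw [Set.mem_iInter] at ht
    apply le_antisymm (ht 0).2.2
    by_contra hcon
    push Not at hcon
    obtain ⟨n, hn⟩ := exists_nat_one_div_lt (sub_pos.2 hcon)
    have := (ht n).2.1
    linarith
  rw [h0] at h
  obtain ⟨n, hn⟩ := (h.eventually (gt_mem_nhds (ENNReal.ofReal_pos.2 hκ))).exists
  refine ⟨1 / ((n : ℝ) + 1), by positivity, ?_⟩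
  rw [Measure.real, ← ENNReal.lt_ofReal_iff_toReal_lt hn.ne_top]
  exact hn

end regions

/-- the density -/
noncomputable def dens {k : ℕ} (ρ : ℝ → ℝ) (l : Fin k) (t : Fin k → ℝ) : ℝ :=
  ρ ((1 - ∑ i, t i) / t l) / ∏ i, t i

/-- uniform smooth number asymptotics up to `W` -/
def USm (ρ : ℝ → ℝ) (W : ℝ) : Prop :=
  ∀ δ > 0, ∃ X0 : ℝ, ∀ X ≥ X0, ∀ z : ℝ, 1 < z → Real.log X ≤ W * Real.log z →
    |((SM X z).card : ℝ) - X * ρ (Real.log X / Real.log z)| ≤ δ * X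

section top
variable {k : ℕ}

open Classical in
lemma card_SM_le {X z : ℝ} (hX : 0 ≤ X) : ((SM X z).card : ℝ) ≤ X := by
  have h : (SM X z).card ≤ ⌊X⌋₊ := by
    unfold SM
    refine (Finset.card_filter_le _ _).trans ?_
    simp
  calc ((SM X z).card : ℝ) ≤ ⌊X⌋₊ := by exact_mod_cast h
    _ ≤ X := Nat.floor_le hX

lemma dens_arg {l : Fin k} (hl : ∀ i, i ≤ l) {ε W : ℝ} (hε : 0 < ε) (hW : 1 / ε ≤ W + 1)
    {t : Fin k → ℝ} (ht : t ∈ Deps l ε) : (1 - ∑ i, t i) / t l ∈ Set.Icc 0 W := by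
  have h := Deps_pos hl ht
  have htl : 0 < t l := hε.trans_le (h l)
  have h1 : t l ≤ ∑ i, t i :=
    Finset.single_le_sum (f := t) (fun j _ => hε.le.trans (h j)) (Finset.mem_univ l)
  have h2 := ht.2.2
  constructor
  · apply div_nonneg _ htl.le; linarith
  · rw [div_le_iff₀ htl]
    rw [div_le_iff₀ hε] at hW
    have h3 := h l
    have : 0 < W + 1 := by nlinarith
    nlinarith

lemma prod_ge {l : Fin k} (hl : ∀ i, i ≤ l) {ε : ℝ} (hε : 0 < ε)
    {t : Fin k → ℝ} (ht : t ∈ Deps l ε) : ε ^ k ≤ ∏ i, t i := by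
  calc ε ^ k = ∏ _i : Fin k, ε := by simp
    _ ≤ _ := Finset.prod_le_prod (fun _ _ => hε.le) (fun i _ => Deps_pos hl ht i)

lemma dens_contOn {ρ : ℝ → ℝ} (hρ : ContinuousOn ρ (Set.Ici 0)) {l : Fin k} (hl : ∀ i, i ≤ l)
    {ε : ℝ} (hε : 0 < ε) : ContinuousOn (dens ρ l) (Deps l ε) := by
  unfold dens
  apply ContinuousOn.div
  · apply hρ.comp
    · apply ContinuousOn.div (by fun_prop) (by fun_prop)
      intro t ht
      exact (hε.trans_le (Deps_pos hl ht l)).ne'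
    · intro t ht
      exact (dens_arg hl hε (W := 1 / ε) (by linarith) ht).1
  · fun_prop
  · intro t ht
    exact ((pow_pos hε k).trans_le (prod_ge hl hε ht)).ne'

lemma wt_eq {x : ℝ} (hx : 1 < x) {p : ℕ} (hp : p.Prime) : wt x p = tau x p / p := by
  unfold wt tau
  have := Real.log_pos hx
  have : (0 : ℝ) < p := by exact_mod_cast hp.pos
  field_simp

lemma bound_rho {ρ : ℝ → ℝ} (hρ : ContinuousOn ρ (Set.Ici 0)) (W : ℝ) :
    ∃ K, 0 ≤ K ∧ ∀ w ∈ Set.Icc 0 W, |ρ w| ≤ K := by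
  obtain ⟨K, hK⟩ := (isCompact_Icc (a := (0 : ℝ)) (b := W)).exists_bound_of_continuousOn
    (hρ.mono Set.Icc_subset_Ici_self)
  refine ⟨max K 0, le_max_right _ _, fun w hw => (hK w hw).trans (le_max_left _ _)⟩

open Classical in
theorem top_tendsto {ρ : ℝ → ℝ} (hρ : ContinuousOn ρ (Set.Ici 0)) {W : ℝ} (hU : USm ρ W)
    {l : Fin k} (hl : ∀ i, i ≤ l) {ε : ℝ} (hε : 0 < ε) (hW : 1 / ε ≤ W + 1)
    {R : Set (Fin k → ℝ)} (hR : NF R) (hRD : R ⊆ Deps l ε) :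
    Tendsto (fun x : ℝ => ((TopSet l x R).ncard : ℝ) / x) atTop
      (nhds (∫ t in R, dens ρ l t)) := by
  obtain ⟨K, hK0, hK⟩ := bound_rho hρ W
  have hεk : 0 < ε ^ k := pow_pos hε k
  set F := R.indicator (dens ρ l) with hF
  have hFb : ∀ t, |F t| ≤ K / ε ^ k := by
    intro t
    by_cases ht : t ∈ R
    · rw [hF, Set.indicator_of_mem ht]
      unfold dens
      have h1 := prod_ge hl hε (hRD ht)
      rw [abs_div, abs_of_pos (hεk.trans_le h1)]
      have := hK _ (dens_arg hl hε hW (hRD ht))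
      gcongr
    · rw [hF, Set.indicator_of_notMem ht, abs_zero]; positivity
  have h1 := SX_tendsto hFb (ae_cont_indicator hR ((dens_contOn hρ hl hε).mono hRD))
  have h2 : ∫ t in cube k, F t = ∫ t in R, dens ρ l t := by
    rw [hF, setIntegral_indicator hR.1, Set.inter_eq_right.2 (hRD.trans (Deps_sub_cube hl hε))]
  rw [h2] at h1
  suffices h3 : Tendsto (fun x : ℝ => ((TopSet l x R).ncard : ℝ) / x - SX x F) atTop (nhds 0) by
    have := h3.add h1
    simpa using this
  rw [Metric.tendsto_nhds]
  intro κ hκ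
  -- choose parameters
  have hvc : 0 ≤ volume.real (cube k) := measureReal_nonneg
  set δ := κ * ε ^ k / (4 * (volume.real (cube k) + 1)) with hδdef
  have hδ : 0 < δ := by positivity
  obtain ⟨δ', hδ', hstrip⟩ := strip_small l (κ := κ * ε ^ k / (4 * (1 + K))) (by positivity)
  obtain ⟨X0, hX0⟩ := hU δ hδ
  set G : (Fin k → ℝ) → ℝ := fun t => δ / ε ^ k + (strip k δ').indicator (fun _ => (1 + K) / ε ^ k) t
    with hG
  have hGb : ∀ t, |G t| ≤ δ / ε ^ k + (1 + K) / ε ^ k := by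
    intro t
    have ha : 0 ≤ δ / ε ^ k := by positivity
    have hb : 0 ≤ (1 + K) / ε ^ k := by positivity
    by_cases ht : t ∈ strip k δ'
    · simp only [hG, Set.indicator_of_mem ht]; rw [abs_of_nonneg (by linarith)]
    · simp only [hG, Set.indicator_of_notMem ht]; rw [abs_of_nonneg (by linarith)]; linarith
  have hGc : ∀ᵐ t : Fin k → ℝ, ContinuousAt G t := by
    filter_upwards [ae_cont_indicator (NF_strip δ') (G := fun _ => (1 + K) / ε ^ k)
      continuousOn_const] with t ht
    exact continuousAt_const.add ht
  have hGl := SX_tendsto hGb hGc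
  have hGi : ∫ t in cube k, G t < κ := by
    have hfin : IsFiniteMeasure (volume.restrict (cube k)) :=
      ⟨by rw [Measure.restrict_apply_univ]; exact volume_cube.lt_top⟩
    simp only [hG]
    rw [integral_add (integrable_const _) ((integrable_const _).indicator (NF_strip δ').1),
      setIntegral_indicator (NF_strip δ').1, setIntegral_const, setIntegral_const,
      smul_eq_mul, smul_eq_mul]
    have e1 : volume.real (cube k) * (δ / ε ^ k) ≤ κ / 4 := by
      rw [hδdef]
      rw [show volume.real (cube k) * (κ * ε ^ k / (4 * (volume.real (cube k) + 1)) / ε ^ k)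
        = (κ / 4) * (volume.real (cube k) / (volume.real (cube k) + 1)) by field_simp]
      have : volume.real (cube k) / (volume.real (cube k) + 1) ≤ 1 := by
        rw [div_le_one (by positivity)]; linarith
      nlinarith
    have e2 : volume.real (cube k ∩ strip k δ') * ((1 + K) / ε ^ k) ≤ κ / 4 := by
      calc _ ≤ κ * ε ^ k / (4 * (1 + K)) * ((1 + K) / ε ^ k) := by gcongr
        _ = κ / 4 := by field_simp
    linarith
  have hxX : ∀ᶠ x : ℝ in atTop, X0 ≤ x ^ δ' := (tendsto_rpow_atTop hδ').eventually_ge_atTop X0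
  filter_upwards [hGl.eventually (gt_mem_nhds hGi), hxX, eventually_gt_atTop 1] with x hGx hx0 hx
  rw [Real.dist_eq, sub_zero]
  refine lt_of_le_of_lt ?_ hGx
  rw [ncard_TopSet hl hx (fun t ht => (hRD ht).1)]
  unfold SX
  rw [Nat.cast_sum, Finset.sum_div, ← Finset.sum_sub_distrib]
  refine (Finset.abs_sum_le_sum_abs _ _).trans (Finset.sum_le_sum ?_)
  intro p hp
  rw [Fintype.mem_piFinset] at hp
  have hpp : ∀ i, (p i).Prime := fun i => ((mem_PX (by linarith)).1 (hp i)).1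
  have hGn : 0 ≤ G (fun i => tau x (p i)) := by
    simp only [hG]
    apply add_nonneg (by positivity)
    apply Set.indicator_nonneg
    intro _ _; positivity
  have hwn : 0 ≤ ∏ i, wt x (p i) := Finset.prod_nonneg (fun i _ => wt_nonneg hx _)
  by_cases ht : (fun i => tau x (p i)) ∈ R
  swap
  · rw [if_neg ht, hF, Set.indicator_of_notMem ht]
    simp only [Nat.cast_zero, zero_div, mul_zero, sub_zero, abs_zero]
    exact mul_nonneg hwn hGn
  rw [if_pos ht, hF, Set.indicator_of_mem ht]
  have htD := hRD ht
  have hprod : (0 : ℝ) < ∏ i, (p i : ℝ) := Finset.prod_pos (fun i _ => by exact_mod_cast (hpp i).pos)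
  have hprodτ := prod_ge hl hε htD
  have hτpos : 0 < ∏ i, tau x (p i) := hεk.trans_le hprodτ
  have hw : ∏ i, wt x (p i) = (∏ i, tau x (p i)) / ∏ i, (p i : ℝ) := by
    rw [← Finset.prod_div_distrib]
    exact Finset.prod_congr rfl (fun i _ => wt_eq hx (hpp i))
  have hX : x / ∏ i, (p i : ℝ) = x ^ (1 - ∑ i, tau x (p i)) := by
    rw [Real.rpow_sub (by linarith), Real.rpow_one]
    have := prod_eq_rpow hx hpp Finset.univ
    rw [← this]; push_cast; rfl
  set X := x / ∏ i, (p i : ℝ) with hXdef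
  have hXpos : 0 < X := by positivity
  have hlx := Real.log_pos hx
  have hpl : (1 : ℝ) < p l := by exact_mod_cast (hpp l).one_lt
  have hlpl := Real.log_pos hpl
  have harg : (1 - ∑ i, tau x (p i)) / tau x (p l) = Real.log X / Real.log (p l) := by
    rw [hX, Real.log_rpow (by linarith)]
    unfold tau
    field_simp
  have hterm : ((SM X (p l)).card : ℝ) / x - (∏ i, wt x (p i)) * dens ρ l (fun i => tau x (p i))
      = (∏ i, wt x (p i)) * ((((SM X (p l)).card : ℝ) / X - ρ (Real.log X / Real.log (p l)))
        / ∏ i, tau x (p i)) := by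
    unfold dens
    simp only
    rw [harg, hw]
    have hxe : x = X * ∏ i, (p i : ℝ) := by rw [hXdef]; field_simp
    have e1 : ((SM X (p l)).card : ℝ) / x = ((SM X (p l)).card : ℝ) / (X * ∏ i, (p i : ℝ)) := by
      rw [← hxe]
    rw [e1]
    field_simp
  rw [hterm, abs_mul, abs_of_nonneg hwn]
  apply mul_le_mul_of_nonneg_left _ hwn
  rw [abs_div, abs_of_pos hτpos]
  have hargm := dens_arg hl hε hW htD
  rw [harg] at hargm
  simp only [hG]
  by_cases hs : (fun i => tau x (p i)) ∈ strip k δ'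
  · rw [Set.indicator_of_mem hs]
    have h5 : |((SM X (p l)).card : ℝ) / X - ρ (Real.log X / Real.log (p l))| ≤ 1 + K := by
      refine (abs_sub _ _).trans ?_
      apply add_le_add _ (hK _ hargm)
      rw [abs_of_nonneg (by positivity), div_le_one hXpos]
      exact card_SM_le hXpos.le
    have : |((SM X (p l)).card : ℝ) / X - ρ (Real.log X / Real.log (p l))| / ∏ i, tau x (p i)
      ≤ (1 + K) / ε ^ k := by gcongr
    have : 0 ≤ δ / ε ^ k := by positivity
    linarith
  · rw [Set.indicator_of_notMem hs, add_zero]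
    have hsum : ∑ i, tau x (p i) ≤ 1 - δ' := by
      by_contra hcon
      push Not at hcon
      exact hs ⟨hcon, htD.2.2⟩
    have hXX : X0 ≤ X := by
      refine hx0.trans ?_
      rw [hX]
      exact Real.rpow_le_rpow_of_exponent_le hx.le (by linarith)
    have h6 := hX0 X hXX (p l) hpl (by
      have := hargm.2
      rwa [div_le_iff₀ hlpl] at this)
    have h7 : |((SM X (p l)).card : ℝ) / X - ρ (Real.log X / Real.log (p l))| ≤ δ := by
      have e : ((SM X (p l)).card : ℝ) / X - ρ (Real.log X / Real.log (p l))
        = (((SM X (p l)).card : ℝ) - X * ρ (Real.log X / Real.log (p l))) / X := by field_simp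
      rw [e, abs_div, abs_of_pos hXpos, div_le_iff₀ hXpos]
      exact h6
    gcongr
end top

section smooth

/-- one-dimensional region: largest prime exceeds `x^(1/w)` -/
def R1 (w : ℝ) : Set (Fin 1 → ℝ) := Deps 0 (1 / w) ∩ {t | 1 / w < ∑ i, t i}

lemma R1_eq (w : ℝ) : R1 w = (MeasurableEquiv.funUnique (Fin 1) ℝ) ⁻¹' (Set.Ioc (1 / w) 1) := by
  ext t
  simp only [R1, Deps, Set.mem_inter_iff, Set.mem_ofPred_eq, Set.mem_preimage, Set.mem_Ioc,
    Fin.sum_univ_one, MeasurableEquiv.funUnique_apply, Fin.default_eq_zero]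
  constructor
  · rintro ⟨⟨-, -, h⟩, h2⟩
    exact ⟨h2, h⟩
  · rintro ⟨h2, h⟩
    refine ⟨⟨?_, h2.le, h⟩, h2⟩
    intro i j _
    rw [Subsingleton.elim i j]

lemma integral_R1 {ρ : ℝ → ℝ} (hρcont : ContinuousOn ρ (Set.Ici 0))
    (hρ_one : ∀ t : ℝ, 0 ≤ t → t ≤ 1 → ρ t = 1)
    (hρ_deriv : ∀ t : ℝ, 1 < t → HasDerivAt ρ (-ρ (t - 1) / t) t) {w : ℝ} (hw : 1 ≤ w) :
    ∫ t in R1 w, dens ρ 0 t = 1 - ρ w := by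
  have hw0 : 0 < w := by linarith
  have h1 : ∫ t in R1 w, dens ρ 0 t = ∫ s in Set.Ioc (1 / w) 1, ρ ((1 - s) / s) / s := by
    rw [R1_eq, ← (volume_preserving_funUnique (Fin 1) ℝ).setIntegral_preimage_emb
      (MeasurableEquiv.measurableEmbedding _)]
    apply setIntegral_congr_fun
    · exact (MeasurableEquiv.measurable _) measurableSet_Ioc
    · intro t _
      simp [dens]
  have hle : 1 / w ≤ 1 := by rw [div_le_one hw0]; exact hw
  have hpos : 0 < 1 / w := by positivity
  rw [h1, ← intervalIntegral.integral_of_le hle]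
  have h2 := intervalIntegral.integral_eq_sub_of_hasDerivAt_of_le (a := 1 / w) (b := 1)
    (f := fun s => ρ (1 / s)) (f' := fun s => ρ ((1 - s) / s) / s) hle ?_ ?_ ?_
  · rw [h2]; simp [hρ_one 1]
  · apply hρcont.comp
    · apply ContinuousOn.div (by fun_prop) (by fun_prop)
      intro s hs; exact (hpos.trans_le hs.1).ne'
    · intro s hs; exact (div_pos one_pos (hpos.trans_le hs.1)).le
  · intro s hs
    have hs0 : 0 < s := hpos.trans hs.1
    have hs1 : 1 < 1 / s := by rw [lt_div_iff₀ hs0]; linarith [hs.2]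
    have hd : HasDerivAt (fun s : ℝ => 1 / s) (-1 / s ^ 2) s := by
      have := hasDerivAt_inv hs0.ne'
      have e : (fun s : ℝ => 1 / s) = fun y => y⁻¹ := by ext y; rw [one_div]
      rw [e, neg_div, one_div]
      exact this
    have := (hρ_deriv _ hs1).comp s hd
    have e : ρ ((1 - s) / s) / s = -ρ (1 / s - 1) / (1 / s) * (-1 / s ^ 2) := by
      rw [show 1 / s - 1 = (1 - s) / s by field_simp]
      field_simp
    rw [e]
    exact this
  · apply ContinuousOn.intervalIntegrable
    rw [Set.uIcc_of_le hle]
    apply ContinuousOn.div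
    · apply hρcont.comp
      · apply ContinuousOn.div (by fun_prop) (by fun_prop)
        intro s hs; exact (hpos.trans_le hs.1).ne'
      · intro s hs
        exact div_nonneg (by linarith [hs.2]) (hpos.trans_le hs.1).le
    · fun_prop
    · intro s hs; exact (hpos.trans_le hs.1).ne'

lemma SM_compl {x w : ℝ} (hx : 1 < x) :
    (SM x (x ^ (1 / w))).card + (TopSet 0 x (R1 w)).ncard = ⌊x⌋₊ := by
  have hx0 : (0 : ℝ) ≤ x := by linarith
  have hd : Disjoint (SM x (x ^ (1 / w)) : Set ℕ) (TopSet 0 x (R1 w)) := by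
    rw [Set.disjoint_left]
    rintro n hn ⟨_, _, p, m, hT, ht⟩
    rw [Finset.mem_coe, mem_SM hx0] at hn
    have h1 := hn.2.2 (p 0) (hT.1 0) (by rw [hT.2.2.2.2]; simp)
    rw [← tau_le_iff hx (hT.1 0).pos] at h1
    have h2 := ht.2
    simp only [Set.mem_ofPred_eq, Fin.sum_univ_one] at h2
    linarith
  have hu : (SM x (x ^ (1 / w)) : Set ℕ) ∪ TopSet 0 x (R1 w) = (Finset.Ioc 0 ⌊x⌋₊ : Finset ℕ) := by
    ext n
    rw [Set.mem_union, Finset.mem_coe, mem_SM hx0, Finset.mem_coe, Finset.mem_Ioc,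
      Nat.le_floor_iff hx0]
    constructor
    · rintro (h | h)
      · exact ⟨h.1, h.2.1⟩
      · exact ⟨h.1, h.2.1⟩
    · rintro ⟨h0, h1⟩
      by_cases h : ∀ p : ℕ, p.Prime → p ∣ n → (p : ℝ) ≤ x ^ (1 / w)
      · exact Or.inl ⟨h0, h1, h⟩
      · right
        push Not at h
        obtain ⟨q, hq, hqn, hlt⟩ := h
        obtain ⟨p, m, hT, hp⟩ := exists_top (k := 1) (l := 0) (fun i => by simp) h0.ne'
          (x ^ (1 / w)) {q} (by intro a ha; rw [Finset.mem_singleton.1 ha]; exact ⟨hq, hqn, hlt⟩) (by simp)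
        refine ⟨h0, h1, p, m, hT, ?_⟩
        have ha : 1 / w < tau x (p 0) := by
          rw [← not_le, tau_le_iff hx (hT.1 0).pos, not_le]; exact hp 0
        have hb : tau x (p 0) ≤ 1 := by
          rw [tau_le_iff hx (hT.1 0).pos, Real.rpow_one]
          refine le_trans ?_ h1
          exact_mod_cast Nat.le_of_dvd h0 (by rw [hT.2.2.2.2]; simp)
        rw [R1_eq]
        simp only [Set.mem_preimage, MeasurableEquiv.funUnique_apply, Fin.default_eq_zero]
        exact ⟨ha, hb⟩
  have hfin : (TopSet 0 x (R1 w)).Finite :=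
    (Finset.finite_toSet (Finset.Ioc 0 ⌊x⌋₊)).subset (hu ▸ Set.subset_union_right)
  have := Set.ncard_union_eq hd (Finset.finite_toSet _) hfin
  rw [hu, Set.ncard_coe_finset, Set.ncard_coe_finset, Nat.card_Ioc] at this
  omega

lemma tendsto_floor_div : Tendsto (fun x : ℝ => (⌊x⌋₊ : ℝ) / x) atTop (nhds 1) :=
  tendsto_nat_floor_div_atTop

lemma psi_pt {ρ : ℝ → ℝ} (hρcont : ContinuousOn ρ (Set.Ici 0))
    (hρ_one : ∀ t : ℝ, 0 ≤ t → t ≤ 1 → ρ t = 1)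
    (hρ_deriv : ∀ t : ℝ, 1 < t → HasDerivAt ρ (-ρ (t - 1) / t) t) {W : ℝ} (hU : USm ρ W)
    {w : ℝ} (hw : 1 ≤ w) (hwW : w ≤ W + 1) :
    Tendsto (fun x : ℝ => ((SM x (x ^ (1 / w))).card : ℝ) / x) atTop (nhds (ρ w)) := by
  have h1 := top_tendsto hρcont hU (l := (0 : Fin 1)) (fun i => by simp) (ε := 1 / w)
    (by positivity) (by simpa using hwW) (R := R1 w) ((NF_Deps _ _).inter (NF_gt _))
    Set.inter_subset_left
  rw [integral_R1 hρcont hρ_one hρ_deriv hw] at h1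
  have h2 := tendsto_floor_div.sub h1
  rw [sub_sub_cancel] at h2
  refine h2.congr' ?_
  filter_upwards [eventually_gt_atTop 1] with x hx
  rw [← sub_div, ← SM_compl (w := w) hx]
  push_cast
  ring

lemma SM_mono {X z z' : ℝ} (hX : 0 ≤ X) (h : z ≤ z') : (SM X z).card ≤ (SM X z').card := by
  apply Finset.card_le_card
  intro n hn
  rw [mem_SM hX] at hn ⊢
  exact ⟨hn.1, hn.2.1, fun p hp hpn => (hn.2.2 p hp hpn).trans h⟩

lemma SM_all {X z : ℝ} (hX : 0 ≤ X) (h : X ≤ z) : (SM X z).card = ⌊X⌋₊ := by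
  have : SM X z = Finset.Ioc 0 ⌊X⌋₊ := by
    ext n
    rw [mem_SM hX, Finset.mem_Ioc, Nat.le_floor_iff hX]
    constructor
    · rintro ⟨a, b, -⟩; exact ⟨a, b⟩
    · rintro ⟨a, b⟩
      refine ⟨a, b, fun p hp hpn => ?_⟩
      have : (p : ℝ) ≤ n := by exact_mod_cast Nat.le_of_dvd a hpn
      linarith
  rw [this, Nat.card_Ioc]; simp

lemma USm_succ {ρ : ℝ → ℝ} (hρcont : ContinuousOn ρ (Set.Ici 0))
    (hρ_one : ∀ t : ℝ, 0 ≤ t → t ≤ 1 → ρ t = 1)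
    (hρ_deriv : ∀ t : ℝ, 1 < t → HasDerivAt ρ (-ρ (t - 1) / t) t) {W : ℝ} (hW0 : 0 ≤ W)
    (hU : USm ρ W) : USm ρ (W + 1) := by
  intro δ hδ
  have huc := (isCompact_Icc (a := (0 : ℝ)) (b := W + 1)).uniformContinuousOn_of_continuous
    (hρcont.mono Set.Icc_subset_Ici_self)
  rw [Metric.uniformContinuousOn_iff] at huc
  obtain ⟨η, hη, huc⟩ := huc (δ / 2) (by positivity)
  set h := η / 2 with hh
  have hh0 : 0 < h := by positivity
  set g : ℕ → ℝ := fun j => min (1 + j * h) (W + 1) with hg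
  have hg1 : ∀ j, 1 ≤ g j := fun j => le_min (by
    have : 0 ≤ (j : ℝ) * h := by positivity
    linarith) (by linarith)
  have hg2 : ∀ j, g j ≤ W + 1 := fun j => min_le_right _ _
  set N := ⌊W / h⌋₊ + 2 with hN
  have hev : ∀ᶠ X : ℝ in atTop, ∀ j ∈ Finset.range N,
      |((SM X (X ^ (1 / g j))).card : ℝ) / X - ρ (g j)| < δ / 2 := by
    rw [Filter.eventually_all_finset]
    intro j _
    have := Metric.tendsto_nhds.1 (psi_pt hρcont hρ_one hρ_deriv hU (hg1 j) (hg2 j)) (δ / 2)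
      (by positivity)
    simpa only [Real.dist_eq] using this
  have hev2 := (hev.and (eventually_ge_atTop (1 / δ))).and (eventually_gt_atTop 1)
  obtain ⟨X0, hX0⟩ := eventually_atTop.1 hev2
  refine ⟨X0, fun X hX z hz hlog => ?_⟩
  obtain ⟨⟨hj, hXδ⟩, hX1⟩ := hX0 X hX
  have hXpos : 0 < X := by linarith
  have hlX := Real.log_pos hX1
  have hlz := Real.log_pos hz
  set w := Real.log X / Real.log z with hw
  have hwpos : 0 < w := by positivity
  have hwW : w ≤ W + 1 := by rw [hw, div_le_iff₀ hlz]; exact hlog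
  rcases le_or_gt w 1 with hw1 | hw1
  · rw [hρ_one w hwpos.le hw1]
    have hXz : X ≤ z := by
      rw [hw, div_le_one hlz] at hw1
      exact (Real.log_le_log_iff hXpos (by linarith)).1 hw1
    rw [SM_all hXpos.le hXz, abs_le]
    have h1 := Nat.floor_le hXpos.le
    have h2 := Nat.lt_floor_add_one X
    rw [div_le_iff₀ hδ] at hXδ
    constructor <;> nlinarith
  · set j := ⌊(w - 1) / h⌋₊ with hjd
    have hq0 : 0 ≤ (w - 1) / h := div_nonneg (by linarith) hh0.le
    have hj1 : (j : ℝ) * h ≤ w - 1 := by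
      have := Nat.floor_le hq0
      rwa [le_div_iff₀ hh0] at this
    have hj2 : w - 1 < ((j : ℝ) + 1) * h := by
      have := Nat.lt_floor_add_one ((w - 1) / h)
      rwa [div_lt_iff₀ hh0] at this
    have hjN : j ≤ ⌊W / h⌋₊ := Nat.floor_le_floor (by gcongr; linarith)
    have ha : g j ≤ w := (min_le_left _ _).trans (by linarith)
    have ha' : w - h ≤ g j := le_min (by linarith) (by linarith)
    have hb : w ≤ g (j + 1) := le_min (by push_cast; linarith) hwW
    have hb' : g (j + 1) ≤ w + h := (min_le_left _ _).trans (by push_cast; linarith)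
    have hzX : z = X ^ (1 / w) := by
      rw [Real.rpow_def_of_pos hXpos, hw, one_div_div, mul_div_cancel₀ _ hlX.ne',
        Real.exp_log (by linarith)]
    have hga : 0 < g j := by linarith [hg1 j]
    have hgb : 0 < g (j + 1) := by linarith [hg1 (j + 1)]
    have hs1 : ((SM X z).card : ℝ) ≤ (SM X (X ^ (1 / g j))).card := by
      have := SM_mono (z := z) (z' := X ^ (1 / g j)) hXpos.le (by
        rw [hzX]; apply Real.rpow_le_rpow_of_exponent_le hX1.le
        exact one_div_le_one_div_of_le hga ha)
      exact_mod_cast this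
    have hs2 : ((SM X (X ^ (1 / g (j + 1)))).card : ℝ) ≤ (SM X z).card := by
      have := SM_mono (z := X ^ (1 / g (j + 1))) (z' := z) hXpos.le (by
        rw [hzX]; apply Real.rpow_le_rpow_of_exponent_le hX1.le
        exact one_div_le_one_div_of_le hwpos hb)
      exact_mod_cast this
    have hA := hj j (Finset.mem_range.2 (by omega))
    have hB := hj (j + 1) (Finset.mem_range.2 (by omega))
    have hwI : w ∈ Set.Icc 0 (W + 1) := ⟨hwpos.le, hwW⟩
    have hC := huc (g j) ⟨hga.le, hg2 j⟩ w hwI (by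
      rw [Real.dist_eq, abs_lt]; constructor <;> linarith)
    have hD := huc (g (j + 1)) ⟨hgb.le, hg2 _⟩ w hwI (by
      rw [Real.dist_eq, abs_lt]; constructor <;> linarith)
    rw [Real.dist_eq, abs_lt] at hC hD
    rw [abs_lt] at hA hB
    have e1 : ((SM X (X ^ (1 / g j))).card : ℝ) / X ≤ ρ w + δ := by linarith
    have e2 : ρ w - δ ≤ ((SM X (X ^ (1 / g (j + 1)))).card : ℝ) / X := by linarith
    rw [div_le_iff₀ hXpos] at e1
    rw [le_div_iff₀ hXpos] at e2
    rw [abs_le]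
    constructor <;> nlinarith

lemma USm_mono {ρ : ℝ → ℝ} {W W' : ℝ} (h : W ≤ W') (hU : USm ρ W') : USm ρ W := by
  intro δ hδ
  obtain ⟨X0, h0⟩ := hU δ hδ
  refine ⟨X0, fun X hX z hz hlog => h0 X hX z hz (hlog.trans ?_)⟩
  have := Real.log_pos hz
  gcongr

theorem USm_all {ρ : ℝ → ℝ} (hρcont : ContinuousOn ρ (Set.Ici 0))
    (hρ_one : ∀ t : ℝ, 0 ≤ t → t ≤ 1 → ρ t = 1)
    (hρ_deriv : ∀ t : ℝ, 1 < t → HasDerivAt ρ (-ρ (t - 1) / t) t) (W : ℝ) : USm ρ W := by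
  have hn : ∀ n : ℕ, USm ρ n := by
    intro n
    induction n with
    | zero =>
      intro δ _
      refine ⟨2, fun X hX z _ hlog => ?_⟩
      have := Real.log_pos (by linarith : (1 : ℝ) < X)
      simp at hlog
      linarith
    | succ n ih =>
      have := USm_succ hρcont hρ_one hρ_deriv (Nat.cast_nonneg n) ih
      push_cast
      exact this
  exact USm_mono (Nat.le_ceil W) (hn _)

lemma rho_nonneg {ρ : ℝ → ℝ} (hρcont : ContinuousOn ρ (Set.Ici 0))
    (hρ_one : ∀ t : ℝ, 0 ≤ t → t ≤ 1 → ρ t = 1)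
    (hρ_deriv : ∀ t : ℝ, 1 < t → HasDerivAt ρ (-ρ (t - 1) / t) t) {w : ℝ} (hw : 0 ≤ w) :
    0 ≤ ρ w := by
  rcases le_total w 1 with h | h
  · rw [hρ_one w hw h]; exact zero_le_one
  · refine ge_of_tendsto (psi_pt hρcont hρ_one hρ_deriv
      (USm_all hρcont hρ_one hρ_deriv w) h (by linarith)) ?_
    filter_upwards [eventually_ge_atTop 0] with x hx
    positivity

end smooth

section tight

lemma variance_bound (Q : Finset ℕ) (hQ : ∀ q ∈ Q, q.Prime) (N : ℕ) :
    ∑ n ∈ Finset.Ioc 0 N, (((Q.filter (· ∣ n)).card : ℝ) - ∑ q ∈ Q, 1 / (q : ℝ)) ^ 2 ≤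
      N * (∑ q ∈ Q, 1 / (q : ℝ)) + 2 * (∑ q ∈ Q, 1 / (q : ℝ)) * Q.card := by
  set L := ∑ q ∈ Q, 1 / (q : ℝ) with hL
  have hL0 : 0 ≤ L := Finset.sum_nonneg fun q _ => by positivity
  have hcard : ∀ n : ℕ, ((Q.filter (· ∣ n)).card : ℝ) = ∑ q ∈ Q, if q ∣ n then (1 : ℝ) else 0 := by
    intro n
    rw [Finset.card_filter]; push_cast; rfl
  have hdiv : ∀ q : ℕ, ∑ n ∈ Finset.Ioc 0 N, (if q ∣ n then (1 : ℝ) else 0) = ((N / q : ℕ) : ℝ) := by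
    intro q
    rw [← Nat.Ioc_filter_dvd_card_eq_div, Finset.card_filter]; push_cast; rfl
  have h1 : N * L - Q.card ≤ ∑ n ∈ Finset.Ioc 0 N, ((Q.filter (· ∣ n)).card : ℝ) := by
    simp_rw [hcard]
    rw [Finset.sum_comm, hL, Finset.mul_sum, Finset.card_eq_sum_ones]
    push_cast
    rw [← Finset.sum_sub_distrib]
    apply Finset.sum_le_sum
    intro q hq
    rw [hdiv]
    have hq0 : 0 < q := (hQ q hq).pos
    have : N < (N / q + 1) * q := by
      have := Nat.lt_div_mul_add (a := N) hq0
      linarith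
    have h2 : (N : ℝ) < (((N / q : ℕ) : ℝ) + 1) * q := by exact_mod_cast this
    have hq1 : (0 : ℝ) < q := by exact_mod_cast hq0
    rw [mul_one_div]
    rw [← div_lt_iff₀ hq1] at h2
    linarith
  have h2 : ∑ n ∈ Finset.Ioc 0 N, ((Q.filter (· ∣ n)).card : ℝ) ^ 2 ≤ N * L ^ 2 + N * L := by
    have e : ∀ n : ℕ, ((Q.filter (· ∣ n)).card : ℝ) ^ 2 =
        ∑ p ∈ Q, ∑ q ∈ Q, if p ∣ n ∧ q ∣ n then (1 : ℝ) else 0 := by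
      intro n
      rw [hcard, sq, Finset.sum_mul_sum]
      apply Finset.sum_congr rfl; intro p _
      apply Finset.sum_congr rfl; intro q _
      by_cases hp : p ∣ n <;> by_cases hq : q ∣ n <;> simp [hp, hq]
    simp_rw [e]
    rw [Finset.sum_comm]
    have e2 : (N : ℝ) * L ^ 2 + N * L = ∑ p ∈ Q, ∑ q ∈ Q,
        (N * (1 / (p : ℝ) * (1 / (q : ℝ))) + if p = q then N * (1 / (p : ℝ)) else 0) := by
      simp_rw [Finset.sum_add_distrib, ← Finset.mul_sum]
      rw [← Finset.sum_mul]
      simp only [Finset.sum_ite_eq]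
      rw [sq, hL]
      congr 1
      rw [Finset.mul_sum]
      apply Finset.sum_congr rfl
      intro q hq; rw [if_pos hq]
    rw [e2]
    apply Finset.sum_le_sum
    intro p hp
    rw [Finset.sum_comm]
    apply Finset.sum_le_sum
    intro q hq
    have hdl : ∀ d : ℕ, ((N / d : ℕ) : ℝ) ≤ N * (1 / (d : ℝ)) := fun d => by
      rw [mul_one_div]; exact Nat.cast_div_le
    by_cases hpq : p = q
    · subst hpq
      simp only [and_self, if_true]
      rw [hdiv]
      have := hdl p
      have h0 : (0 : ℝ) ≤ N * (1 / (p : ℝ) * (1 / (p : ℝ))) := by positivity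
      linarith
    · rw [if_neg hpq, add_zero]
      have hc : Nat.Coprime p q := (Nat.coprime_primes (hQ p hp) (hQ q hq)).2 hpq
      have : ∀ n : ℕ, (p ∣ n ∧ q ∣ n) ↔ p * q ∣ n := fun n =>
        ⟨fun h => hc.mul_dvd_of_dvd_of_dvd h.1 h.2,
          fun h => ⟨(Dvd.intro _ rfl).trans h, (Dvd.intro_left _ rfl).trans h⟩⟩
      simp_rw [this]
      rw [hdiv]
      refine (hdl _).trans (le_of_eq ?_)
      push_cast
      rw [one_div_mul_one_div]
  have h3 : ∑ n ∈ Finset.Ioc 0 N, (((Q.filter (· ∣ n)).card : ℝ) - L) ^ 2 =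
      ∑ n ∈ Finset.Ioc 0 N, ((Q.filter (· ∣ n)).card : ℝ) ^ 2
        - 2 * L * ∑ n ∈ Finset.Ioc 0 N, ((Q.filter (· ∣ n)).card : ℝ) + N * L ^ 2 := by
    rw [Finset.mul_sum, ← Finset.sum_sub_distrib]
    have : (N : ℝ) * L ^ 2 = ∑ n ∈ Finset.Ioc 0 N, L ^ 2 := by simp
    rw [this, ← Finset.sum_add_distrib]
    apply Finset.sum_congr rfl
    intro n _; ring
  rw [h3]
  nlinarith [mul_le_mul_of_nonneg_left h1 hL0]

/-- primes in `(x^ε, x]` -/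
noncomputable def QX (x ε : ℝ) : Finset ℕ := (PX x).filter (fun p => ε < tau x p)

lemma QX_sum (w : ℝ) (hw : 1 ≤ w) :
    Tendsto (fun x : ℝ => ∑ q ∈ QX x (1 / w), 1 / (q : ℝ)) atTop (nhds (Real.log w)) := by
  classical
  have hw0 : 0 < w := by linarith
  have hle : 1 / w ≤ 1 := by rw [div_le_one hw0]; exact hw
  have hpos : 0 < 1 / w := by positivity
  have hR : NF (R1 w) := (NF_Deps _ _).inter (NF_gt _)
  have hmem : ∀ t ∈ R1 w, 1 / w < t 0 := by
    intro t ht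
    rw [R1_eq] at ht; exact ht.1
  set F : (Fin 1 → ℝ) → ℝ := (R1 w).indicator (fun t => 1 / t 0) with hF
  have hb : ∀ t, |F t| ≤ w := by
    intro t
    by_cases ht : t ∈ R1 w
    · rw [hF, Set.indicator_of_mem ht]
      have h1 := hmem t ht
      have h2 : 0 < t 0 := hpos.trans h1
      rw [abs_of_pos (by positivity)]
      rw [div_lt_iff₀ hw0] at h1
      rw [div_le_iff₀ h2]; linarith
    · rw [hF, Set.indicator_of_notMem ht, abs_zero]; exact hw0.le
  have h1 := SX_tendsto hb (ae_cont_indicator hR (by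
    apply ContinuousOn.div (by fun_prop) (by fun_prop)
    intro t ht; exact (hpos.trans (hmem t ht)).ne'))
  have hsub : R1 w ⊆ cube 1 := Set.inter_subset_left.trans (Deps_sub_cube (fun i => by simp) hpos)
  have hi : ∫ t in cube 1, F t = Real.log w := by
    rw [hF, setIntegral_indicator hR.1, Set.inter_eq_right.2 hsub]
    have : ∫ t in R1 w, 1 / t 0 = ∫ s in Set.Ioc (1 / w) 1, 1 / s := by
      rw [R1_eq, ← (volume_preserving_funUnique (Fin 1) ℝ).setIntegral_preimage_emb
        (MeasurableEquiv.measurableEmbedding _)]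
      rfl
    rw [this, ← intervalIntegral.integral_of_le hle, integral_one_div]
    · simp
    · rw [Set.uIcc_of_le hle]; exact fun h => absurd h.1 (not_le.2 hpos)
  rw [hi] at h1
  refine h1.congr' ?_
  filter_upwards [eventually_gt_atTop 1] with x hx
  unfold SX QX
  rw [Finset.sum_filter]
  symm
  apply Finset.sum_nbij' (fun q => fun _ : Fin 1 => q) (fun p => p 0)
  · intro q hq; rw [Fintype.mem_piFinset]; intro _; exact hq
  · intro p hp; exact (Fintype.mem_piFinset.1 hp) 0
  · intro q _; rfl
  · intro p _; ext i; rw [Subsingleton.elim i 0]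
  · intro q hq
    have hq' := (mem_PX (by linarith)).1 hq
    have hiff : (fun _ : Fin 1 => tau x q) ∈ R1 w ↔ 1 / w < tau x q := by
      rw [R1_eq]
      refine ⟨fun h => h.1, fun h => ⟨h, ?_⟩⟩
      change tau x q ≤ 1
      rw [tau_le_iff hx hq'.1.pos, Real.rpow_one]; exact hq'.2
    simp only [Fin.prod_univ_one]
    by_cases h : 1 / w < tau x q
    · rw [if_pos h, hF, Set.indicator_of_mem (hiff.2 h), wt_eq hx hq'.1]
      have : 0 < tau x q := hpos.trans h
      field_simp
    · rw [if_neg h, hF, Set.indicator_of_notMem (fun h' => h (hiff.1 h')), mul_zero]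

variable {k : ℕ}

/-- integers without `k` large primes -/
def Bad (l : Fin k) (x ε : ℝ) : Set ℕ :=
  {n | 0 < n ∧ (n : ℝ) ≤ x ∧ ¬ ∃ p m, TopDec l n p m ∧ (fun i => tau x (p i)) ∈ Deps l ε}

lemma TopDec_Deps {l : Fin k} {x ε : ℝ} (hx : 1 < x) {n : ℕ} (hn : (n : ℝ) ≤ x)
    {p : Fin k → ℕ} {m : ℕ} (hT : TopDec l n p m) (h : ∀ i, x ^ ε < p i) :
    (fun i => tau x (p i)) ∈ Deps l ε := by
  refine ⟨?_, ?_, ?_⟩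
  · intro i j hij
    change tau x (p j) ≤ tau x (p i)
    rw [tau_le_iff hx (hT.1 j).pos, rpow_tau hx (hT.1 i).pos]
    exact_mod_cast hT.2.1 hij
  · change ε ≤ tau x (p l)
    rw [le_tau_iff hx (hT.1 l).pos]; exact (h l).le
  · have h1 := prod_eq_rpow hx hT.1 Finset.univ
    have h2 : ((∏ i, p i : ℕ) : ℝ) ≤ x := by
      refine le_trans ?_ hn
      rw [hT.2.2.2.2]
      exact_mod_cast Nat.le_mul_of_pos_right _ (Nat.pos_of_ne_zero hT.2.2.2.1)
    rw [h1] at h2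
    have h3 : x ^ (∑ i, tau x (p i)) ≤ x ^ (1 : ℝ) := by rw [Real.rpow_one]; exact h2
    exact (Real.rpow_le_rpow_left_iff hx).1 h3

lemma Bad_bound {l : Fin k} (hl : ∀ i, i ≤ l) {x ε : ℝ} (hx : 1 < x)
    (hL : 2 * (k : ℝ) + 1 ≤ ∑ q ∈ QX x ε, 1 / (q : ℝ)) :
    ((Bad l x ε).ncard : ℝ) ≤ 12 * x / ∑ q ∈ QX x ε, 1 / (q : ℝ) := by
  classical
  have hx0 : (0 : ℝ) ≤ x := by linarith
  set Q := QX x ε with hQ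
  set L := ∑ q ∈ Q, 1 / (q : ℝ) with hLd
  have hk0 : (0 : ℝ) ≤ k := Nat.cast_nonneg k
  have hLpos : 0 < L := by linarith
  have hQm : ∀ q ∈ Q, q.Prime ∧ (q : ℝ) ≤ x ∧ ε < tau x q := by
    intro q hq
    rw [hQ, QX, Finset.mem_filter, mem_PX hx0] at hq
    exact ⟨hq.1.1, hq.1.2, hq.2⟩
  have hQc : (Q.card : ℝ) ≤ x := by
    have h1 : Q ⊆ Finset.Ioc 0 ⌊x⌋₊ := by
      intro q hq
      rw [Finset.mem_Ioc, Nat.le_floor_iff hx0]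
      exact ⟨(hQm q hq).1.pos, (hQm q hq).2.1⟩
    have h2 := Finset.card_le_card h1
    rw [Nat.card_Ioc] at h2
    calc (Q.card : ℝ) ≤ ⌊x⌋₊ := by exact_mod_cast h2
      _ ≤ x := Nat.floor_le hx0
  have hv := variance_bound Q (fun q hq => (hQm q hq).1) ⌊x⌋₊
  rw [← hLd] at hv
  set B := (Finset.Ioc 0 ⌊x⌋₊).filter (fun n => (Q.filter (· ∣ n)).card < k) with hB
  have hsub : Bad l x ε ⊆ (B : Set ℕ) := by
    rintro n ⟨h0, h1, h2⟩
    rw [Finset.mem_coe, hB, Finset.mem_filter, Finset.mem_Ioc, Nat.le_floor_iff hx0]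
    refine ⟨⟨h0, h1⟩, ?_⟩
    by_contra hcon
    push Not at hcon
    obtain ⟨p, m, hT, hp⟩ := exists_top hl h0.ne' (x ^ ε) (Q.filter (· ∣ n)) (by
      intro q hq
      rw [Finset.mem_filter] at hq
      have := hQm q hq.1
      refine ⟨this.1, hq.2, ?_⟩
      rw [← not_le, ← tau_le_iff hx this.1.pos, not_le]; exact this.2.2) hcon
    exact h2 ⟨p, m, hT, TopDec_Deps hx h1 hT hp⟩
  have hn : ((Bad l x ε).ncard : ℝ) ≤ B.card := by
    have := Set.ncard_le_ncard hsub (Finset.finite_toSet _)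
    rw [Set.ncard_coe_finset] at this
    exact_mod_cast this
  have hb : (B.card : ℝ) * (L ^ 2 / 4) ≤ ⌊x⌋₊ * L + 2 * L * Q.card := by
    refine le_trans ?_ hv
    refine le_trans ?_ (Finset.sum_le_sum_of_subset_of_nonneg (s := B) (Finset.filter_subset _ _)
      (fun _ _ _ => sq_nonneg _))
    rw [← nsmul_eq_mul]
    apply Finset.card_nsmul_le_sum
    intro n hn
    rw [hB, Finset.mem_filter] at hn
    have : ((Q.filter (· ∣ n)).card : ℝ) < k := by exact_mod_cast hn.2
    nlinarith
  have hfl := Nat.floor_le hx0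
  rw [le_div_iff₀ hLpos]
  have : (B.card : ℝ) * (L ^ 2 / 4) ≤ 3 * x * L := by nlinarith
  have h4 : (B.card : ℝ) * L ≤ 12 * x := by
    by_contra hcon
    push Not at hcon
    nlinarith
  nlinarith

lemma Bad_mono {l : Fin k} {x ε ε' : ℝ} (h : ε ≤ ε') : Bad l x ε ⊆ Bad l x ε' := by
  rintro n ⟨h0, h1, h2⟩
  refine ⟨h0, h1, fun ⟨p, m, hT, hD⟩ => h2 ⟨p, m, hT, hD.1, h.trans hD.2.1, hD.2.2⟩⟩

lemma finite_le (x : ℝ) (S : Set ℕ) (h : ∀ n ∈ S, (n : ℝ) ≤ x) : S.Finite := by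
  apply (Set.finite_Iic ⌊x⌋₊).subset
  intro n hn
  exact Nat.le_floor (h n hn)

theorem tight {l : Fin k} (hl : ∀ i, i ≤ l) {κ : ℝ} (hκ : 0 < κ) :
    ∃ ε0 > 0, ∀ ε ≤ ε0, ∀ᶠ x : ℝ in atTop, ((Bad l x ε).ncard : ℝ) ≤ κ * x := by
  set M : ℝ := max (2 * (k : ℝ) + 1) (12 / κ) with hM
  have hMpos : 0 < M := lt_of_lt_of_le (by positivity) (le_max_right _ _)
  set w := Real.exp (M + 1) with hw
  have hw1 : 1 ≤ w := Real.one_le_exp (by linarith)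
  refine ⟨1 / w, by positivity, fun ε hε => ?_⟩
  have h1 := QX_sum w hw1
  rw [hw, Real.log_exp] at h1
  filter_upwards [h1.eventually (lt_mem_nhds (by linarith : M < M + 1)),
    eventually_gt_atTop 1] with x hxM hx
  have hb := Bad_bound hl (ε := 1 / w) hx ((le_max_left _ _).trans hxM.le)
  have hmono : ((Bad l x ε).ncard : ℝ) ≤ (Bad l x (1 / w)).ncard := by
    exact_mod_cast Set.ncard_le_ncard (Bad_mono hε) (finite_le x _ (fun n hn => hn.2.1))
  refine hmono.trans (hb.trans ?_)
  have hx0 : 0 < x := by linarith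
  have h2 : 12 / κ < ∑ q ∈ QX x (1 / w), 1 / (q : ℝ) := lt_of_le_of_lt (le_max_right _ _) hxM
  rw [div_le_iff₀ ((by positivity : 0 < 12 / κ).trans h2)]
  rw [div_lt_iff₀ hκ] at h2
  nlinarith

end tight

section final
variable {k : ℕ}

/-- the open-at-zero simplex -/
def D0 (l : Fin k) : Set (Fin k → ℝ) := {t | Antitone t ∧ 0 < t l ∧ ∑ i, t i ≤ 1}

lemma Deps_anti (l : Fin k) {ε ε' : ℝ} (h : ε ≤ ε') : Deps l ε' ⊆ Deps l ε :=
  fun _ ht => ⟨ht.1, h.trans ht.2.1, ht.2.2⟩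

lemma Deps_sub_D0 (l : Fin k) {ε : ℝ} (h : 0 < ε) : Deps l ε ⊆ D0 l :=
  fun _ ht => ⟨ht.1, h.trans_le ht.2.1, ht.2.2⟩

lemma D0_eq (l : Fin k) : D0 l = ⋃ n : ℕ, Deps l (1 / ((n : ℝ) + 1)) := by
  ext t
  rw [Set.mem_iUnion]
  constructor
  · rintro ⟨h1, h2, h3⟩
    obtain ⟨n, hn⟩ := exists_nat_one_div_lt h2
    exact ⟨n, h1, hn.le, h3⟩
  · rintro ⟨n, hn⟩
    exact Deps_sub_D0 l (by positivity) hn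

lemma seq_anti {a b : ℕ} (h : a ≤ b) : 1 / ((b : ℝ) + 1) ≤ 1 / ((a : ℝ) + 1) := by
  apply one_div_le_one_div_of_le (by positivity)
  have : (a : ℝ) ≤ b := by exact_mod_cast h
  linarith

lemma measurable_D0 (l : Fin k) : MeasurableSet (D0 l) := by
  rw [D0_eq]
  exact MeasurableSet.iUnion fun n => (isClosed_Deps l _).measurableSet

lemma integrable_Deps {ρ : ℝ → ℝ} (hρcont : ContinuousOn ρ (Set.Ici 0)) {l : Fin k}
    (hl : ∀ i, i ≤ l) {ε : ℝ} (hε : 0 < ε) : IntegrableOn (dens ρ l) (Deps l ε) := by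
  apply ContinuousOn.integrableOn_compact _ (dens_contOn hρcont hl hε)
  apply (isCompact_Icc (a := (0 : Fin k → ℝ)) (b := 1)).of_isClosed_subset (isClosed_Deps l ε)
  intro t ht
  have := Deps_sub_cube hl hε ht
  exact ⟨fun i => (this i trivial).1.le, fun i => (this i trivial).2⟩

lemma dens_nonneg {ρ : ℝ → ℝ} (hρ0 : ∀ w, 0 ≤ w → 0 ≤ ρ w) {l : Fin k}
    (hl : ∀ i, i ≤ l) {t : Fin k → ℝ} (ht : t ∈ D0 l) : 0 ≤ dens ρ l t := by
  have h : ∀ i, 0 < t i := fun i => ht.2.1.trans_le (ht.1 (hl i))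
  apply div_nonneg
  · apply hρ0
    exact div_nonneg (by linarith [ht.2.2]) (h l).le
  · exact Finset.prod_nonneg fun i _ => (h i).le

lemma ncard_le_floor {x : ℝ} (hx : 0 ≤ x) {S : Set ℕ} (h : ∀ n ∈ S, 0 < n ∧ (n : ℝ) ≤ x) :
    (S.ncard : ℝ) ≤ x := by
  have h1 : S ⊆ (Finset.Ioc 0 ⌊x⌋₊ : Finset ℕ) := by
    intro n hn
    rw [Finset.mem_coe, Finset.mem_Ioc, Nat.le_floor_iff hx]
    exact h n hn
  have h2 := Set.ncard_le_ncard h1 (Finset.finite_toSet _)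
  rw [Set.ncard_coe_finset, Nat.card_Ioc] at h2
  calc (S.ncard : ℝ) ≤ ⌊x⌋₊ := by exact_mod_cast h2
    _ ≤ x := Nat.floor_le hx

lemma integrable_D0 {ρ : ℝ → ℝ} (hρcont : ContinuousOn ρ (Set.Ici 0))
    (hρ0 : ∀ w, 0 ≤ w → 0 ≤ ρ w) (hU : ∀ W, USm ρ W) {l : Fin k}
    (hl : ∀ i, i ≤ l) : IntegrableOn (dens ρ l) (D0 l) := by
  have hcov : AECover (volume.restrict (D0 l)) atTop
      (fun n : ℕ => Deps l (1 / ((n : ℝ) + 1))) := by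
    constructor
    · rw [ae_restrict_iff' (measurable_D0 l)]
      refine Eventually.of_forall fun t ht => ?_
      rw [D0_eq, Set.mem_iUnion] at ht
      obtain ⟨n, hn⟩ := ht
      filter_upwards [eventually_ge_atTop n] with m hm
      exact Deps_anti l (seq_anti hm) hn
    · intro n; exact (isClosed_Deps l _).measurableSet
  have hres : ∀ n : ℕ, (volume.restrict (D0 l)).restrict (Deps l (1 / ((n : ℝ) + 1))) =
      volume.restrict (Deps l (1 / ((n : ℝ) + 1))) := fun n => by
    rw [Measure.restrict_restrict (isClosed_Deps l _).measurableSet,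
      Set.inter_eq_left.2 (Deps_sub_D0 l (by positivity))]
  refine hcov.integrable_of_integral_bounded_of_nonneg_ae 1 ?_ ?_ ?_
  · intro n
    rw [IntegrableOn, hres]
    exact integrable_Deps hρcont hl (by positivity)
  · rw [ae_restrict_iff' (measurable_D0 l)]
    exact Eventually.of_forall fun t ht => dens_nonneg hρ0 hl ht
  · refine Eventually.of_forall fun n => ?_
    rw [hres]
    have hε : (0 : ℝ) < 1 / ((n : ℝ) + 1) := by positivity
    refine le_of_tendsto (top_tendsto hρcont (hU (1 / (1 / ((n : ℝ) + 1)))) hl hε (by linarith)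
      (NF_Deps l _) le_rfl) ?_
    filter_upwards [eventually_gt_atTop 0] with x hx
    rw [div_le_one hx]
    exact ncard_le_floor hx.le fun n hn => ⟨hn.1, hn.2.1⟩

/-- integers without a divisor in the range -/
def NoDiv (u v x : ℝ) : Set ℕ :=
  {n | 0 < n ∧ (n : ℝ) ≤ x ∧ ∀ d : ℕ, d ∣ n → x ^ u < (d : ℝ) → x ^ v ≤ (d : ℝ)}

theorem NoDiv_tendsto {ρ : ℝ → ℝ} (hρcont : ContinuousOn ρ (Set.Ici 0))
    (hρ0 : ∀ w, 0 ≤ w → 0 ≤ ρ w) (hU : ∀ W, USm ρ W) {l : Fin k}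
    (hl : ∀ i, i ≤ l) {u v : ℝ} (hk : 1 < (k + 1) * (v - u)) :
    Tendsto (fun x : ℝ => ((NoDiv u v x).ncard : ℝ) / x) atTop
      (nhds (∫ t in D0 l ∩ Nset u v 0 k, dens ρ l t)) := by
  have hI := integrable_D0 hρcont hρ0 hU hl
  set J := ∫ t in D0 l ∩ Nset u v 0 k, dens ρ l t with hJ
  have hNm : ∀ η, MeasurableSet (Nset u v η k) := fun η => (NF_Nset u v η).1
  rw [tendsto_order]
  constructor
  · -- lower bound
    intro a ha
    have hmon : Tendsto (fun n : ℕ => ∫ t in Deps l (1 / ((n : ℝ) + 1)) ∩ Nset u v 0 k, dens ρ l t)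
        atTop (nhds J) := by
      have heq : D0 l ∩ Nset u v 0 k = ⋃ n : ℕ, Deps l (1 / ((n : ℝ) + 1)) ∩ Nset u v 0 k := by
        rw [D0_eq, Set.iUnion_inter]
      rw [hJ, heq]
      apply tendsto_setIntegral_of_monotone
      · intro n; exact (isClosed_Deps l _).measurableSet.inter (hNm 0)
      · intro m n hmn
        exact Set.inter_subset_inter_left _ (Deps_anti l (seq_anti hmn))
      · rw [← heq]; exact hI.mono_set Set.inter_subset_left
    obtain ⟨n, hn⟩ := (hmon.eventually (lt_mem_nhds ha)).exists
    have hε : (0 : ℝ) < 1 / ((n : ℝ) + 1) := by positivity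
    have ht := top_tendsto hρcont (hU (1 / (1 / ((n : ℝ) + 1)))) hl hε (by linarith)
      ((NF_Deps l (1 / ((n : ℝ) + 1))).inter (NF_Nset u v 0)) Set.inter_subset_left
    filter_upwards [ht.eventually (lt_mem_nhds hn), eventually_gt_atTop 1] with x hx hx1
    refine hx.trans_le ?_
    have hx0 : 0 < x := by linarith
    gcongr
    · exact finite_le x _ fun n hn => hn.2.1
    · rintro m ⟨h0, h1, p, q, hT, hR⟩
      exact ⟨h0, h1, fun d hd h => no_div_of_Nset hx1 hT h1 hR.2 hd h⟩
  · -- upper bound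
    intro b hb
    have hant : Tendsto (fun n : ℕ => ∫ t in D0 l ∩ Nset u v (1 / ((n : ℝ) + 1)) k, dens ρ l t)
        atTop (nhds J) := by
      have heq : D0 l ∩ Nset u v 0 k = ⋂ n : ℕ, D0 l ∩ Nset u v (1 / ((n : ℝ) + 1)) k := by
        rw [← Set.inter_iInter]
        congr 1
        ext t
        rw [Set.mem_iInter]
        constructor
        · intro ht n E
          refine (ht E).imp id fun h => ?_
          have : (0 : ℝ) < 1 / ((n : ℝ) + 1) := by positivity
          linarith
        · intro ht E
          by_contra hcon
          push Not at hcon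
          obtain ⟨n, hn⟩ := exists_nat_one_div_lt (sub_pos.2 hcon.2)
          rcases ht n E with h | h <;> linarith [hcon.1]
      rw [hJ, heq]
      apply tendsto_setIntegral_of_antitone
      · intro n; exact (measurable_D0 l).inter (hNm _)
      · intro m n hmn
        apply Set.inter_subset_inter_right
        intro t ht E
        refine (ht E).imp id fun h => ?_
        have := seq_anti hmn
        linarith
      · exact ⟨0, hI.mono_set Set.inter_subset_left⟩
    set κ := (b - J) / 4 with hκ
    have hκ0 : 0 < κ := by rw [hκ]; linarith
    obtain ⟨n, hn⟩ := (hant.eventually (gt_mem_nhds (by linarith : J < J + κ))).exists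
    set η : ℝ := 1 / ((n : ℝ) + 1) with hη
    have hη0 : 0 < η := by positivity
    obtain ⟨ε, hε, htight⟩ := tight hl hκ0
    have htight := htight ε le_rfl
    have ht := top_tendsto hρcont (hU (1 / ε)) hl hε (by linarith)
      ((NF_Deps l ε).inter (NF_Nset u v η)) Set.inter_subset_left
    have hlt : ∫ t in Deps l ε ∩ Nset u v η k, dens ρ l t < J + κ := by
      refine lt_of_le_of_lt (setIntegral_mono_set (hI.mono_set Set.inter_subset_left) ?_ ?_) hn
      · refine (ae_restrict_iff' ((measurable_D0 l).inter (hNm _))).2 ?_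
        exact Eventually.of_forall fun t ht => dens_nonneg hρ0 hl ht.1
      · exact (Set.inter_subset_inter_left _ (Deps_sub_D0 l hε)).eventuallyLE
    have hpow : ∀ᶠ x : ℝ in atTop, x ^ (-η) < κ :=
      (tendsto_rpow_neg_atTop hη0).eventually (gt_mem_nhds hκ0)
    filter_upwards [ht.eventually (gt_mem_nhds hlt), htight, hpow, eventually_gt_atTop 1]
      with x h1 h2 h3 hx1
    have hx0 : 0 < x := by linarith
    rw [div_lt_iff₀ hx0] at h1 ⊢
    set S1 : Set ℕ := {n | 0 < n ∧ (n : ℝ) ≤ x ^ (1 - η)} with hS1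
    have hsub : NoDiv u v x ⊆ S1 ∪ TopSet l x (Deps l ε ∩ Nset u v η k) ∪ Bad l x ε := by
      rintro m ⟨hm0, hmx, hd⟩
      by_cases hB : m ∈ Bad l x ε
      · exact Or.inr hB
      · left
        rcases le_or_gt (m : ℝ) (x ^ (1 - η)) with hs | hs
        · exact Or.inl ⟨hm0, hs⟩
        · right
          have hex : ∃ p q, TopDec l m p q ∧ (fun i => tau x (p i)) ∈ Deps l ε := by
            by_contra hcon
            exact hB ⟨hm0, hmx, hcon⟩
          obtain ⟨p, q, hT, hD⟩ := hex
          exact ⟨hm0, hmx, p, q, hT, hD, Nset_of_no_div hl hx1 hT hmx hs.le hk hd⟩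
    have hf1 : S1.Finite := finite_le _ _ fun n hn => hn.2
    have hf2 : (TopSet l x (Deps l ε ∩ Nset u v η k)).Finite := finite_le x _ fun n hn => hn.2.1
    have hf3 : (Bad l x ε).Finite := finite_le x _ fun n hn => hn.2.1
    have hc := Set.ncard_le_ncard hsub ((hf1.union hf2).union hf3)
    have hc2 := hc.trans ((Set.ncard_union_le _ _).trans
      (Nat.add_le_add_right (Set.ncard_union_le _ _) _))
    have hc3 : ((NoDiv u v x).ncard : ℝ) ≤ S1.ncard +
        (TopSet l x (Deps l ε ∩ Nset u v η k)).ncard + (Bad l x ε).ncard := by exact_mod_cast hc2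
    have hs1 : (S1.ncard : ℝ) ≤ x ^ (1 - η) := ncard_le_floor (by positivity) fun n hn => hn
    have hs2 : x ^ (1 - η) = x * x ^ (-η) := by
      rw [sub_eq_add_neg, Real.rpow_add hx0, Real.rpow_one]
    have hs3 : x * x ^ (-η) ≤ x * κ := by gcongr
    have : b * x = (J + κ) * x + κ * x + x * κ + κ * x := by rw [hκ]; ring
    have : 0 < κ * x := by positivity
    linarith

lemma Hcnt_add (u v : ℝ) {x : ℝ} (hx : 0 ≤ x) :
    Hcnt x (x ^ u) (x ^ v) + (NoDiv u v x).ncard = ⌊x⌋₊ := by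
  unfold Hcnt
  set A : Set ℕ := {n : ℕ | 1 ≤ n ∧ (n : ℝ) ≤ x ∧ ∃ d : ℕ, d ∣ n ∧ x ^ u < (d : ℝ) ∧ (d : ℝ) < x ^ v}
    with hA
  have hd : Disjoint A (NoDiv u v x) := by
    rw [Set.disjoint_left]
    rintro n ⟨_, _, d, h1, h2, h3⟩ ⟨_, _, h⟩
    exact absurd (h d h1 h2) (not_le.2 h3)
  have hu : A ∪ NoDiv u v x = (Finset.Ioc 0 ⌊x⌋₊ : Finset ℕ) := by
    ext n
    rw [Set.mem_union, Finset.mem_coe, Finset.mem_Ioc, Nat.le_floor_iff hx]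
    constructor
    · rintro (h | h)
      · exact ⟨h.1, h.2.1⟩
      · exact ⟨h.1, h.2.1⟩
    · rintro ⟨h0, h1⟩
      by_cases h : ∃ d : ℕ, d ∣ n ∧ x ^ u < (d : ℝ) ∧ (d : ℝ) < x ^ v
      · exact Or.inl ⟨h0, h1, h⟩
      · right
        push Not at h
        exact ⟨h0, h1, h⟩
  have := Set.ncard_union_eq hd (finite_le x _ fun n hn => hn.2.1)
    (finite_le x _ fun n hn => hn.2.1)
  rw [hu, Set.ncard_coe_finset, Nat.card_Ioc] at this
  omega

lemma sum_Puv {ρ : ℝ → ℝ} {l : Fin k} (hl : ∀ i, i ≤ l) {u v : ℝ} (huv : u < v)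
    (hI : IntegrableOn (dens ρ l) (D0 l)) :
    ∑ ℰ : Finset (Finset (Fin k)), ∫ t in Puv u v ℰ, dens ρ l t =
      ∫ t in D0 l ∩ Nset u v 0 k, dens ρ l t := by
  classical
  set P : Finset (Finset (Fin k)) → Set (Fin k → ℝ) := fun ℰ => Puv u v ℰ ∩ {t | t l ≠ 0} with hP
  have hnull : ∀ᵐ t : Fin k → ℝ, t l ≠ 0 := by
    have := Measure.pi_hyperplane (fun _ : Fin k => (volume : Measure ℝ)) l 0
    rw [ae_iff]
    simpa [volume_pi] using this
  have h1 : ∀ ℰ, ∫ t in Puv u v ℰ, dens ρ l t = ∫ t in P ℰ, dens ρ l t := by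
    intro ℰ
    apply setIntegral_congr_set
    filter_upwards [hnull] with t ht
    apply propext
    exact ⟨fun h => ⟨h, ht⟩, fun h => h.1⟩
  have hPD : ∀ ℰ, P ℰ ⊆ D0 l := by
    rintro ℰ t ⟨⟨⟨ha, hb, hc⟩, -⟩, hne⟩
    exact ⟨fun i j hij => ha i j hij, lt_of_le_of_ne (hb l) (Ne.symm hne), hc⟩
  have hmeas : ∀ ℰ, MeasurableSet (P ℰ) := by
    intro ℰ
    have : P ℰ = D0 l ∩ ⋂ E : Finset (Fin k), ({t | E ∈ ℰ → v ≤ ∑ i ∈ E, t i} ∩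
        {t | E ∉ ℰ → 1 - u ≤ ∑ i ∈ Eᶜ, t i}) := by
      ext t
      rw [Set.mem_inter_iff (x := t) (a := D0 l), Set.mem_iInter]
      constructor
      · intro ht
        exact ⟨hPD ℰ ht, fun E => ht.1.2 E⟩
      · rintro ⟨⟨ha, hb, hc⟩, h⟩
        exact ⟨⟨⟨fun i j hij => ha hij, fun i => hb.le.trans (ha (hl i)), hc⟩, fun E => h E⟩, hb.ne'⟩
    rw [this]
    refine (measurable_D0 l).inter (MeasurableSet.iInter fun E => ?_)
    have m1 : MeasurableSet {t : Fin k → ℝ | v ≤ ∑ i ∈ E, t i} := (NF_ge v E).1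
    have m2 : MeasurableSet {t : Fin k → ℝ | 1 - u ≤ ∑ i ∈ Eᶜ, t i} := (NF_ge _ _).1
    by_cases hE : E ∈ ℰ
    · simpa [hE] using m1
    · simpa [hE] using m2
  have hdisj : Pairwise (Function.onFun Disjoint P) := by
    have key : ∀ ℰ ℱ : Finset (Finset (Fin k)), ∀ t, t ∈ P ℰ → t ∈ P ℱ → ℰ ⊆ ℱ := by
      intro ℰ ℱ t ht1 ht2 E hE
      by_contra hF
      have a := (ht1.1.2 E).1 hE
      have b := (ht2.1.2 E).2 hF
      have c := ht1.1.1.2.2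
      have d := Finset.sum_add_sum_compl E t
      linarith
    intro ℰ ℱ hne
    rw [Function.onFun, Set.disjoint_left]
    intro t h1 h2
    exact hne (Finset.Subset.antisymm (key _ _ t h1 h2) (key _ _ t h2 h1))
  have hun : ⋃ ℰ, P ℰ = D0 l ∩ Nset u v 0 k := by
    ext t
    rw [Set.mem_iUnion]
    constructor
    · rintro ⟨ℰ, ht⟩
      refine ⟨hPD ℰ ht, fun E => ?_⟩
      by_cases hE : E ∈ ℰ
      · exact Or.inl ((ht.1.2 E).1 hE)
      · right
        have := (ht.1.2 E).2 hE
        linarith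
    · rintro ⟨⟨ha, hb, hc⟩, hN⟩
      refine ⟨Finset.univ.filter (fun E => v ≤ ∑ i ∈ E, t i),
        ⟨⟨fun i j hij => ha hij, fun i => hb.le.trans (ha (hl i)), hc⟩, fun E => ?_⟩, hb.ne'⟩
      rw [Finset.mem_filter]
      refine ⟨fun h => h.2, fun h => ?_⟩
      rcases hN E with h' | h'
      · exact absurd ⟨Finset.mem_univ _, h'⟩ h
      · linarith
  rw [← hun, integral_iUnion_fintype hmeas hdisj fun ℰ => hI.mono_set (hPD ℰ)]
  exact Finset.sum_congr rfl fun ℰ _ => h1 ℰ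

end final

theorem stmt_1 (ρ : ℝ → ℝ) (hρcont : ContinuousOn ρ (Set.Ici 0))
    (hρ_one : ∀ t : ℝ, 0 ≤ t → t ≤ 1 → ρ t = 1)
    (hρ_deriv : ∀ t : ℝ, 1 < t → HasDerivAt ρ (-ρ (t - 1) / t) t)
    (u v : ℝ) (hu : 0 ≤ u) (huv : u < v) (hv : v ≤ 1)
    (k : ℕ) (hk : k = ⌊1 / (v - u)⌋₊) :
    Tendsto (fun x : ℝ => (Hcnt x (x ^ u) (x ^ v) : ℝ) / x) atTop
      (nhds (1 - ∑ ℰ : Finset (Finset (Fin k)),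
        ∫ t in Puv u v ℰ,
          ρ ((1 - ∑ i, t i) / t ⟨k - 1, by
              have hk0 : 0 < k := by
                rw [hk]
                exact Nat.floor_pos.mpr (one_le_one_div (by linarith) (by linarith))
              omega⟩) / ∏ i, t i)) := by
  have hk0 : 0 < k := by
    rw [hk]
    exact Nat.floor_pos.mpr (one_le_one_div (by linarith) (by linarith))
  have hU := USm_all hρcont hρ_one hρ_deriv
  have hρ0 : ∀ w, 0 ≤ w → 0 ≤ ρ w := fun w hw => rho_nonneg hρcont hρ_one hρ_deriv hw
  have hkk : 1 < ((k : ℝ) + 1) * (v - u) := by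
    have := Nat.lt_floor_add_one (1 / (v - u))
    rw [← hk, div_lt_iff₀ (by linarith)] at this
    exact this
  have hl : ∀ i : Fin k, i ≤ ⟨k - 1, by omega⟩ := fun i => by
    rw [Fin.le_def]
    have := i.2
    simp only
    omega
  have hI := integrable_D0 hρcont hρ0 hU hl
  have hmain := tendsto_floor_div.sub (NoDiv_tendsto hρcont hρ0 hU hl hkk)
  rw [← sum_Puv hl huv hI] at hmain
  refine Tendsto.congr' ?_ hmain
  filter_upwards [eventually_gt_atTop 0] with x hx
  rw [← sub_div, ← Hcnt_add u v hx.le]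
  push_cast
  ring
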